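/- arXiv:1702.07868 — 8 statements merged into one kernel-verified Lean document; each statement's English description precedes it below -/
import Mathlib

section
/- Let x* ∈ (−R, R) with x* ≠ r₀. Then (x*, 0) is a critical point of X if and only if x*·a(x*)·b(x*) = λ, where λ = c·(r₀ − R²/r₀). -/
/-!
On the axis the first component of the field vanishes, and each vortex contributes to the
second a multiple of the reciprocal of its signed distance. The difference of the two reciprocals is
`(p - q) / ((x - p) * (x - q))`, so clearing denominators gives the cubic equation. The image vortex
`R² / r₀` lies beyond `R`, so `(-R, R)` avoids it.
-/

section Field

variable {K : Type*} [Field K]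

/-- The vortex vector field `X`: a rigid rotation with angular velocity `θ` plus the velocity fields
of two opposite vortices at `(p, 0)` and `(q, 0)`, of circulation `-2πcθ` and `2πcθ` over the reals.
The image of a vortex at `p` in the circle of radius `R` is the case `q = R ^ 2 / p`. Where a
denominator vanishes, the field takes the junk value that division by zero gives. -/
def vortexField (θ c p q x y : K) : K × K :=
  (-θ * y + c * θ * y * (1 / ((x - p) ^ 2 + y ^ 2) - 1 / ((x - q) ^ 2 + y ^ 2)),
    θ * x - c * θ * ((x - p) / ((x - p) ^ 2 + y ^ 2) - (x - q) / ((x - q) ^ 2 + y ^ 2)))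

theorem vortexField_zero_right (θ c p q x : K) :
    vortexField θ c p q x 0 = (0, θ * (x - c * ((x - p)⁻¹ - (x - q)⁻¹))) := by
  have div_sq_add_zero (a : K) : a / (a ^ 2 + 0 ^ 2) = a⁻¹ := by
    rw [zero_pow two_ne_zero, add_zero, sq, div_self_mul_self']
  rw [vortexField, div_sq_add_zero, div_sq_add_zero]
  ext <;> ring

theorem critical_point_on_axis_iff_general {θ p q x : K} (c : K)
    (hθ : θ ≠ 0) (hp : x ≠ p) (hq : x ≠ q) :
    vortexField θ c p q x 0 = (0, 0) ↔ x * (x - p) * (x - q) = c * (p - q) := by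
  have ha : x - p ≠ 0 := sub_ne_zero.mpr hp
  have hb : x - q ≠ 0 := sub_ne_zero.mpr hq
  calc vortexField θ c p q x 0 = (0, 0)
      ↔ x = c * ((x - p)⁻¹ - (x - q)⁻¹) := by
        rw [vortexField_zero_right, Prod.mk_right_inj, mul_eq_zero_iff_left hθ, sub_eq_zero]
    _ ↔ x = c * (p - q) / ((x - p) * (x - q)) := by
        rw [inv_sub_inv ha hb, sub_sub_sub_cancel_left, mul_div_assoc]
    _ ↔ x * (x - p) * (x - q) = c * (p - q) := by
        rw [eq_div_iff (mul_ne_zero ha hb), mul_assoc]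

end Field

theorem lt_sq_div_of_lt {K : Type*} [Field K] [LinearOrder K] [IsStrictOrderedRing K] {r R : K}
    (hr : 0 < r) (hrR : r < R) : R < R ^ 2 / r := by
  rw [lt_div_iff₀ hr, sq]
  exact mul_lt_mul_of_pos_left hrR (hr.trans hrR)

/-- for `x* ∈ (−R, R)` with `x* ≠ r₀`, the point `(x*, 0)` is a critical
point of the vortex vector field `X` if and only if `x*·a(x*)·b(x*) = λ`, where
`λ = c·(r₀ − R²/r₀)`. -/
theorem critical_point_on_axis_iff
    (R r₀ θ₀ Γ : ℝ)
    (hR : 0 < R) (hr₀ : 0 < r₀) (hrR : r₀ < R) (hθ : θ₀ ≠ 0) (hΓ : Γ ≠ 0)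
    (c : ℝ) (hc : c = Γ / (2 * Real.pi * θ₀))
    (X : ℝ → ℝ → ℝ × ℝ)
    (hX : ∀ x y : ℝ, X x y =
      (-θ₀ * y + c * θ₀ * y *
          (1 / ((x - r₀) ^ 2 + y ^ 2) - 1 / ((x - R ^ 2 / r₀) ^ 2 + y ^ 2)),
       θ₀ * x - c * θ₀ *
          ((x - r₀) / ((x - r₀) ^ 2 + y ^ 2) -
            (x - R ^ 2 / r₀) / ((x - R ^ 2 / r₀) ^ 2 + y ^ 2))))
    (x : ℝ) (hx₁ : -R < x) (hx₂ : x < R) (hx₃ : x ≠ r₀) :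
    X x 0 = (0, 0) ↔ x * (x - r₀) * (x - R ^ 2 / r₀) = c * (r₀ - R ^ 2 / r₀) := by
  obtain rfl : X = vortexField θ₀ c r₀ (R ^ 2 / r₀) := funext₂ hX
  exact critical_point_on_axis_iff_general c hθ hx₃ (hx₂.trans (lt_sq_div_of_lt hr₀ hrR)).ne
end

section
/- Assume c < 0. If (x, y) satisfies x² + y² ≤ R² and y ≠ 0, then X(x, y) ≠ 0. In other words, when the vortex strength and the angular velocity have opposite signs, every critical point of X in the closed disk D_R of radius R lies on the horizontal axis {y = 0}. -/
/-!
The horizontal component of the field factors as `θ y (-1 + c (1 / d₁² - 1 / d₂²))`, where `d₁` and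
`d₂` are the distances to the vortex and to its image. Since `2 R ≤ r₀ + R² / r₀`, every point of
the disk is at least as close to the vortex as to the image, so for `c ≤ 0` the last factor is at
most `-1`.
-/

/-- The planar field of a rigid rotation with angular velocity `θ` together with two opposite point
vortices, of relative strength `c`, at `(p, 0)` and `(q, 0)`. The field `X` of a vortex at
`(r₀, 0)` in the disk of radius `R` is the case `p = r₀`, `q = R ^ 2 / r₀`.
At a pole, the quotients singular there take the value `0`. -/
noncomputable def vortexPairField (θ c p q x y : ℝ) : ℝ × ℝ :=
  (-θ * y + c * θ * y * (1 / ((x - p) ^ 2 + y ^ 2) - 1 / ((x - q) ^ 2 + y ^ 2)),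
    θ * x - c * θ * ((x - p) / ((x - p) ^ 2 + y ^ 2) - (x - q) / ((x - q) ^ 2 + y ^ 2)))

theorem abs_sub_le_abs_sub_of_two_mul_le_add {p q x : ℝ} (hpq : p ≤ q) (hx : 2 * x ≤ p + q) :
    |x - p| ≤ |x - q| :=
  calc |x - p| ≤ q - x := abs_le.mpr ⟨by linarith, by linarith⟩
    _ ≤ |q - x| := le_abs_self _
    _ = |x - q| := abs_sub_comm q x

theorem abs_sub_le_abs_sub_sq_div {R r x : ℝ} (hr : 0 < r) (hrR : r ≤ R) (hx : x ≤ R) :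
    |x - r| ≤ |x - R ^ 2 / r| := by
  have hmid : 2 * R ≤ r + R ^ 2 / r := by
    simpa [div_eq_inv_mul] using two_mul_le_add_mul_sq (a := 1) (b := R) hr
  exact abs_sub_le_abs_sub_of_two_mul_le_add (by linarith) (by linarith)

theorem no_offaxis_critical_points_of_c_neg_general {θ c p q x y : ℝ} (hθ : θ ≠ 0) (hc : c ≤ 0)
    (hx : |x - p| ≤ |x - q|) (hy : y ≠ 0) : (vortexPairField θ c p q x y).1 ≠ 0 := by
  have hdist : (x - p) ^ 2 + y ^ 2 ≤ (x - q) ^ 2 + y ^ 2 := by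
    gcongr ?_ + _
    exact sq_le_sq.mpr hx
  have hinv : 0 ≤ 1 / ((x - p) ^ 2 + y ^ 2) - 1 / ((x - q) ^ 2 + y ^ 2) :=
    sub_nonneg.mpr (one_div_le_one_div_of_le (by positivity) hdist)
  have hfactor : -1 + c * (1 / ((x - p) ^ 2 + y ^ 2) - 1 / ((x - q) ^ 2 + y ^ 2)) < 0 := by
    linarith [mul_nonpos_of_nonpos_of_nonneg hc hinv]
  calc (vortexPairField θ c p q x y).1
      = θ * y * (-1 + c * (1 / ((x - p) ^ 2 + y ^ 2) - 1 / ((x - q) ^ 2 + y ^ 2))) := by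
        simp only [vortexPairField]
        ring
    _ ≠ 0 := mul_ne_zero (mul_ne_zero hθ hy) hfactor.ne

/-- if `c < 0` (vortex strength and angular velocity of opposite signs),
then `X` has no critical points off the horizontal axis inside the closed disk `D_R`. -/
theorem no_offaxis_critical_points_of_c_neg
    (R r₀ θ₀ Γ : ℝ)
    (hR : 0 < R) (hr₀ : 0 < r₀) (hrR : r₀ < R) (hθ : θ₀ ≠ 0) (hΓ : Γ ≠ 0)
    (c : ℝ) (hc : c = Γ / (2 * Real.pi * θ₀)) (hcneg : c < 0)
    (X : ℝ → ℝ → ℝ × ℝ)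
    (hX : ∀ x y : ℝ, X x y =
      (-θ₀ * y + c * θ₀ * y *
          (1 / ((x - r₀) ^ 2 + y ^ 2) - 1 / ((x - R ^ 2 / r₀) ^ 2 + y ^ 2)),
       θ₀ * x - c * θ₀ *
          ((x - r₀) / ((x - r₀) ^ 2 + y ^ 2) -
            (x - R ^ 2 / r₀) / ((x - R ^ 2 / r₀) ^ 2 + y ^ 2))))
    (x y : ℝ) (hdisk : x ^ 2 + y ^ 2 ≤ R ^ 2) (hy : y ≠ 0) :
    X x y ≠ (0, 0) := by
  have hxR : x ≤ R := le_of_abs_le (abs_le_of_sq_le_sq (by linarith [sq_nonneg y]) hR.le)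
  exact fun h ↦ no_offaxis_critical_points_of_c_neg_general hθ hcneg.le
    (abs_sub_le_abs_sub_sq_div hr₀ hrR.le hxR) hy (congrArg Prod.fst ((hX x y).symm.trans h))
end

section
/- Assume φ₀ > 0, and set x_s* = (R² + r₀²)/(2r₀) − (c/(2r₀))·(1 − r₀²/R²). Then x_s* ∈ (−R, R) if and only if ρ₀ > max{(1 − φ₀)/(1 + φ₀), (φ₀ − 1)/(1 + φ₀)}. -/
/-!
With `ρ = r₀ / R` and `k = c / R²`, the abscissa is an affine decreasing function of `k` which takes
the values `R` and `-R` at `k = (1 - ρ) / (1 + ρ)` and `k = (1 + ρ) / (1 - ρ)`. So it lies in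
`(-R, R)` exactly when `k` lies between these two numbers. They are mutually inverse and positive,
so the same condition holds for `φ₀ = k⁻¹`; solved for `ρ`, it is the asserted bound.
-/

section OffAxisEquilibrium

variable {K : Type*} [Field K]

/-- The abscissa `x_s*` of the off-axis equilibria in the disk of radius `R`, as a function of the
parameters `r = r₀` and `c = Γ / (2πθ₀)`. -/
def offAxisAbscissa (R r c : K) : K :=
  (R ^ 2 + r ^ 2) / (2 * r) - (c / (2 * r)) * (1 - r ^ 2 / R ^ 2)

lemma sub_offAxisAbscissa [NeZero (2 : K)] {R r : K} (hR : R ≠ 0) (hr : r ≠ 0) (hRr : R + r ≠ 0)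
    (c : K) :
    R - offAxisAbscissa R r c =
      (R ^ 2 - r ^ 2) / (2 * r) * (c / R ^ 2 - (1 - r / R) / (1 + r / R)) := by
  unfold offAxisAbscissa
  field_simp
  ring

lemma offAxisAbscissa_add [NeZero (2 : K)] {R r : K} (hR : R ≠ 0) (hr : r ≠ 0) (hRr : R - r ≠ 0)
    (c : K) :
    offAxisAbscissa R r c + R =
      (R ^ 2 - r ^ 2) / (2 * r) * ((1 + r / R) / (1 - r / R) - c / R ^ 2) := by
  unfold offAxisAbscissa
  field_simp
  ring

variable [LinearOrder K]

/-- The values of the dimensionless strength `c / R²` for which the off-axis equilibria lie in the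
disk, where `ρ` stands for `r₀ / R`. -/
def strengthWindow (ρ : K) : Set K :=
  Set.Ioo ((1 - ρ) / (1 + ρ)) ((1 + ρ) / (1 - ρ))

variable [IsStrictOrderedRing K]

lemma offAxisAbscissa_mem_Ioo_iff {R r : K} (hr : 0 < r) (hrR : r < R) (c : K) :
    offAxisAbscissa R r c ∈ Set.Ioo (-R) R ↔ c / R ^ 2 ∈ strengthWindow (r / R) := by
  have hR : 0 < R := hr.trans hrR
  have slope_pos : 0 < (R ^ 2 - r ^ 2) / (2 * r) :=
    div_pos (sub_pos.2 (pow_lt_pow_left₀ hrR hr.le two_ne_zero)) (by positivity)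
  have left_iff : -R < offAxisAbscissa R r c ↔ c / R ^ 2 < (1 + r / R) / (1 - r / R) := by
    rw [neg_lt_iff_pos_add, offAxisAbscissa_add hR.ne' hr.ne' (sub_pos.2 hrR).ne',
      mul_pos_iff_of_pos_left slope_pos, sub_pos]
  have right_iff : offAxisAbscissa R r c < R ↔ (1 - r / R) / (1 + r / R) < c / R ^ 2 := by
    rw [← sub_pos, sub_offAxisAbscissa hR.ne' hr.ne' (add_pos hR hr).ne',
      mul_pos_iff_of_pos_left slope_pos, sub_pos]
  exact (and_congr left_iff right_iff).trans and_comm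

variable {ρ : K}

lemma pos_of_mem_strengthWindow (hρ : -1 < ρ) (hρ' : ρ < 1) {x : K}
    (hx : x ∈ strengthWindow ρ) : 0 < x :=
  (div_pos (sub_pos.2 hρ') (neg_lt_iff_pos_add'.1 hρ)).trans hx.1

lemma mem_strengthWindow_iff (hρ : -1 < ρ) (hρ' : ρ < 1) {x : K} :
    x ∈ strengthWindow ρ ↔ 1 - ρ < x * (1 + ρ) ∧ x * (1 - ρ) < 1 + ρ := by
  rw [strengthWindow, Set.mem_Ioo, div_lt_iff₀ (neg_lt_iff_pos_add'.1 hρ),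
    lt_div_iff₀ (sub_pos.2 hρ')]

lemma inv_mem_strengthWindow (hρ : -1 < ρ) (hρ' : ρ < 1) {x : K}
    (hx : x ∈ strengthWindow ρ) : x⁻¹ ∈ strengthWindow ρ := by
  have hx_pos : 0 < x := pos_of_mem_strengthWindow hρ hρ' hx
  obtain ⟨hlower, hupper⟩ := (mem_strengthWindow_iff hρ hρ').1 hx
  exact (mem_strengthWindow_iff hρ hρ').2
    ⟨(lt_inv_mul_iff₀ hx_pos).2 hupper, (inv_mul_lt_iff₀ hx_pos).2 hlower⟩

lemma mem_strengthWindow_iff_of_mul_eq_one (hρ : -1 < ρ) (hρ' : ρ < 1) {x y : K}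
    (hxy : x * y = 1) : x ∈ strengthWindow ρ ↔ y ∈ strengthWindow ρ := by
  obtain rfl : y = x⁻¹ := eq_inv_of_mul_eq_one_right hxy
  exact ⟨inv_mem_strengthWindow hρ hρ',
    fun h ↦ inv_inv x ▸ inv_mem_strengthWindow hρ hρ' h⟩

lemma mem_strengthWindow_iff_max_lt (hρ : -1 < ρ) (hρ' : ρ < 1) {φ : K} (hφ : φ ≠ -1) :
    φ ∈ strengthWindow ρ ↔ max ((1 - φ) / (1 + φ)) ((φ - 1) / (1 + φ)) < ρ := by
  rcases hφ.lt_or_gt with hφ_lt | hφ_gt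
  · have not_mem : φ ∉ strengthWindow ρ := fun h ↦ by
      linarith [pos_of_mem_strengthWindow hρ hρ' h]
    have one_lt : 1 < (φ - 1) / (1 + φ) :=
      (one_lt_div_of_neg (by linarith)).2 (by linarith)
    exact iff_of_false not_mem fun h ↦
      (hρ'.trans one_lt).not_gt ((le_max_right _ _).trans_lt h)
  · have hφ_pos : 0 < 1 + φ := neg_lt_iff_pos_add'.1 hφ_gt
    rw [mem_strengthWindow_iff hρ hρ', max_lt_iff, div_lt_iff₀ hφ_pos, div_lt_iff₀ hφ_pos]
    constructor <;> rintro ⟨hlower, hupper⟩ <;> constructor <;> linarith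

end OffAxisEquilibrium

theorem xs_in_disk_iff_general
    (R r₀ θ₀ Γ : ℝ)
    (hr₀ : 0 < r₀) (hrR : r₀ < R) (hθ : θ₀ ≠ 0) (hΓ : Γ ≠ 0)
    (c ρ₀ φ₀ : ℝ) (hc : c = Γ / (2 * Real.pi * θ₀))
    (hρ : ρ₀ = r₀ / R) (hφ : φ₀ = R ^ 2 / c) (hφ_ne : φ₀ ≠ -1)
    (xs : ℝ)
    (hxs : xs = (R ^ 2 + r₀ ^ 2) / (2 * r₀) - (c / (2 * r₀)) * (1 - r₀ ^ 2 / R ^ 2)) :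
    (-R < xs ∧ xs < R) ↔
      max ((1 - φ₀) / (1 + φ₀)) ((φ₀ - 1) / (1 + φ₀)) < ρ₀ := by
  have hR : 0 < R := hr₀.trans hrR
  have hρ_pos : 0 < ρ₀ := hρ ▸ div_pos hr₀ hR
  have hρ_gt : -1 < ρ₀ := neg_one_lt_zero.trans hρ_pos
  have hρ_lt : ρ₀ < 1 := hρ ▸ (div_lt_one hR).2 hrR
  have hc_ne : c ≠ 0 := hc ▸ div_ne_zero hΓ (mul_ne_zero Real.two_pi_pos.ne' hθ)
  have strength_mul : c / R ^ 2 * φ₀ = 1 := by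
    rw [hφ, div_mul_div_cancel₀ (pow_ne_zero 2 hR.ne'), div_self hc_ne]
  calc (-R < xs ∧ xs < R)
      ↔ offAxisAbscissa R r₀ c ∈ Set.Ioo (-R) R := by rw [hxs]; rfl
    _ ↔ c / R ^ 2 ∈ strengthWindow ρ₀ := hρ ▸ offAxisAbscissa_mem_Ioo_iff hr₀ hrR c
    _ ↔ φ₀ ∈ strengthWindow ρ₀ :=
      mem_strengthWindow_iff_of_mul_eq_one hρ_gt hρ_lt strength_mul
    _ ↔ max ((1 - φ₀) / (1 + φ₀)) ((φ₀ - 1) / (1 + φ₀)) < ρ₀ :=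
      mem_strengthWindow_iff_max_lt hρ_gt hρ_lt hφ_ne

/-- for `φ₀ > 0`, the abscissa `x_s*` of the off-axis equilibria lies in
`(−R, R)` if and only if `ρ₀ > max{(1 − φ₀)/(1 + φ₀), (φ₀ − 1)/(1 + φ₀)}`. -/
theorem xs_in_disk_iff
    (R r₀ θ₀ Γ : ℝ)
    (hR : 0 < R) (hr₀ : 0 < r₀) (hrR : r₀ < R) (hθ : θ₀ ≠ 0) (hΓ : Γ ≠ 0)
    (c ρ₀ φ₀ : ℝ) (hc : c = Γ / (2 * Real.pi * θ₀))
    (hρ : ρ₀ = r₀ / R) (hφ : φ₀ = R ^ 2 / c) (hφpos : 0 < φ₀)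
    (xs : ℝ)
    (hxs : xs = (R ^ 2 + r₀ ^ 2) / (2 * r₀) - (c / (2 * r₀)) * (1 - r₀ ^ 2 / R ^ 2)) :
    (-R < xs ∧ xs < R) ↔
      max ((1 - φ₀) / (1 + φ₀)) ((φ₀ - 1) / (1 + φ₀)) < ρ₀ :=
  xs_in_disk_iff_general R r₀ θ₀ Γ hr₀ hrR hθ hΓ c ρ₀ φ₀ hc hρ hφ
    (neg_one_lt_zero.trans hφpos).ne' xs hxs
end

section
/- Assume φ₀ > 0 and ρ₀ > max{(1 − φ₀)/(1 + φ₀), (φ₀ − 1)/(1 + φ₀)}, and let (x_s*, y_s*) with y_s* > 0 be the off-axis critical point of X on the boundary circle, where x_s* = (R² + r₀²)/(2r₀) − (c/(2r₀))·(1 − r₀²/R²) and (y_s*)² = (1/4)·(2(c² + R⁴)/R² − (c − R²)²/r₀² − (c + R²)²·r₀²/R⁴). Then the determinant of the Jacobian matrix of X at (x_s*, ±y_s*) equals (cR − R³ − (c + R²)r₀)·(cR − R³ + (c + R²)r₀)·θ₀² / (c²·(R² − r₀²)), and this value is negative; in particular (x_s*, ±y_s*) are hyperbolic saddles. -/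
/-- The Jacobian matrix of a planar vector field `X : ℝ → ℝ → ℝ × ℝ` at the point `(x, y)`. -/
noncomputable def jacobianMatrix (X : ℝ → ℝ → ℝ × ℝ) (x y : ℝ) : Matrix (Fin 2) (Fin 2) ℝ :=
  !![deriv (fun s => (X s y).1) x, deriv (fun s => (X x s).1) y;
     deriv (fun s => (X s y).2) x, deriv (fun s => (X x s).2) y]

/-!
With `z = x + i y`, the vortex field is `F z = iθz - iθc * conj (g z)`, where
`g z = 1 / (z - p) - 1 / (z - q)` is holomorphic. For a real-linear map `h ↦ a h + b (conj h)` the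
determinant is `‖a‖² - ‖b‖²`, so the Jacobian determinant of `F` is `θ² (1 - c² ‖g' z‖²)`, and
the parallelogram law expresses `‖g' z‖` through the distances `‖z - p‖`, `‖z - q‖` and `‖p - q‖`.
Because `q = R² / conj p` is the inverse of `p` in the circle `‖z‖ = R`, on that circle
`‖z - q‖ = (R / ‖p‖) ‖z - p‖`, and `F z = 0` becomes `‖z - p‖² = c (R² - ‖p‖²) / R²`.
Substituting this gives the determinant as a difference of two squares, whose sign is the region
condition.
-/

open Complex ComplexConjugate EuclideanGeometry

section Inversion

variable {V P : Type*} [NormedAddCommGroup V] [InnerProductSpace ℝ V] [MetricSpace P]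
  [NormedAddTorsor V P] {o p z : P} {R : ℝ}

theorem dist_inversion_of_mem_sphere (hR : R ≠ 0) (hp : p ≠ o) (hz : z ∈ Metric.sphere o R) :
    dist z (inversion o R p) = R / dist p o * dist z p := by
  have hzo : z ≠ o := Metric.ne_of_mem_sphere hz hR
  have h := dist_inversion_inversion hzo hp R
  rw [inversion_of_mem_sphere hz, Metric.mem_sphere.mp hz] at h
  rw [h]
  field_simp

theorem dist_self_inversion_sq (hp : p ≠ o) :
    dist p (inversion o R p) ^ 2 = (R ^ 2 - dist p o ^ 2) ^ 2 / dist p o ^ 2 := by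
  have hpo : dist p o ≠ 0 := dist_ne_zero.mpr hp
  rw [inversion_eq_lineMap, dist_right_lineMap, dist_comm o p, mul_pow, Real.norm_eq_abs, sq_abs]
  field_simp
  ring

end Inversion

/-- The vector field on `ℝ × ℝ` given by the field `F` on the complex plane, in the curried form
on which `jacobianMatrix` acts. -/
def planarField (F : ℂ → ℂ) (x y : ℝ) : ℝ × ℝ :=
  ((F ⟨x, y⟩).re, (F ⟨x, y⟩).im)

theorem det_jacobianMatrix_planarField {F : ℂ → ℂ} {a b : ℂ} {x y : ℝ}
    (hF : HasFDerivAt F (a • (1 : ℂ →L[ℝ] ℂ) + b • (conjCLE : ℂ →L[ℝ] ℂ)) ⟨x, y⟩) :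
    (jacobianMatrix (planarField F) x y).det = ‖a‖ ^ 2 - ‖b‖ ^ 2 := by
  have hline_x : HasDerivAt (fun s : ℝ => (⟨s, y⟩ : ℂ)) 1 x := by
    simpa [mk_eq_add_mul_I] using (hasDerivAt_id x).ofReal_comp.add_const ((y : ℂ) * I)
  have hline_y : HasDerivAt (fun s : ℝ => (⟨x, s⟩ : ℂ)) I y := by
    simpa [mk_eq_add_mul_I] using
      ((hasDerivAt_id y).ofReal_comp.mul_const I).const_add (x : ℂ)
  have hF_x : HasDerivAt (fun s : ℝ => F ⟨s, y⟩) (a + b) x := by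
    simpa [Function.comp_def] using hF.comp_hasDerivAt x hline_x
  have hF_y : HasDerivAt (fun s : ℝ => F ⟨x, s⟩) (a * I - b * I) y := by
    simpa [Function.comp_def, sub_eq_add_neg] using hF.comp_hasDerivAt y hline_y
  have deriv_re {f : ℝ → ℂ} {f' : ℂ} {t : ℝ} (hf : HasDerivAt f f' t) :
      deriv (fun s => (f s).re) t = f'.re := (reCLM.hasFDerivAt.comp_hasDerivAt t hf).deriv
  have deriv_im {f : ℝ → ℂ} {f' : ℂ} {t : ℝ} (hf : HasDerivAt f f' t) :
      deriv (fun s => (f s).im) t = f'.im := (imCLM.hasFDerivAt.comp_hasDerivAt t hf).deriv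
  simp only [jacobianMatrix, planarField, Matrix.det_fin_two_of, deriv_re hF_x, deriv_re hF_y,
    deriv_im hF_x, deriv_im hF_y, Complex.sq_norm, normSq_apply, add_re, add_im, sub_re, sub_im,
    mul_I_re, mul_I_im]
  ring

/-- The velocity field, in complex notation, of a rotation with angular speed `θ` and two opposite
point vortices at `p` and `q` of circulations `∓2πcθ`. Conjugating the reciprocals turns the
holomorphic complex velocity into the velocity vector. -/
noncomputable def vortexVelocity (θ c : ℝ) (p q z : ℂ) : ℂ :=
  θ * I * z - θ * c * I * conj ((z - p)⁻¹ - (z - q)⁻¹)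

theorem hasFDerivAt_vortexVelocity (θ c : ℝ) {p q z : ℂ} (hp : z ≠ p) (hq : z ≠ q) :
    HasFDerivAt (vortexVelocity θ c p q)
      ((θ * I) • (1 : ℂ →L[ℝ] ℂ) +
        (θ * c * I * conj (((z - p) ^ 2)⁻¹ - ((z - q) ^ 2)⁻¹)) • (conjCLE : ℂ →L[ℝ] ℂ)) z := by
  have hinv {w : ℂ} (hw : z ≠ w) :
      HasDerivAt (fun z => (z - w)⁻¹) (-((z - w) ^ 2)⁻¹) z := by
    simpa [neg_div] using ((hasDerivAt_id z).sub_const w).fun_inv (sub_ne_zero.mpr hw)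
  have hconj := conjCLE.hasFDerivAt.comp z
    ((hinv hp).fun_sub (hinv hq)).complexToReal_fderiv
  refine (((hasFDerivAt_id z).const_mul (θ * I : ℂ)).sub
    (hconj.const_mul (θ * c * I))).congr_fderiv ?_
  ext
  simp only [sub_apply, add_apply, smul_apply, smul_eq_mul, ContinuousLinearMap.comp_apply,
    ContinuousLinearMap.id_apply, one_apply_eq_self, ContinuousLinearEquiv.coe_coe,
    ContinuousAlgEquiv.coeCLE_apply, conjCAE_apply, map_mul, map_add, map_neg, map_sub,
    sub_neg_eq_add]
  ring

theorem det_jacobianMatrix_vortexVelocity (θ c : ℝ) {p q : ℂ} {x y : ℝ}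
    (hp : (⟨x, y⟩ : ℂ) ≠ p) (hq : (⟨x, y⟩ : ℂ) ≠ q) :
    (jacobianMatrix (planarField (vortexVelocity θ c p q)) x y).det =
      θ ^ 2 * (1 - c ^ 2 * (‖p - q‖ ^ 2 *
        (2 * (‖⟨x, y⟩ - p‖ ^ 2 + ‖⟨x, y⟩ - q‖ ^ 2) - ‖p - q‖ ^ 2)) /
          (‖⟨x, y⟩ - p‖ ^ 2 * ‖⟨x, y⟩ - q‖ ^ 2) ^ 2) := by
  rw [det_jacobianMatrix_planarField (hasFDerivAt_vortexVelocity θ c hp hq)]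
  set u : ℂ := ⟨x, y⟩ - p with hu
  set v : ℂ := ⟨x, y⟩ - q with hv
  have hu0 : u ≠ 0 := sub_ne_zero.mpr hp
  have hv0 : v ≠ 0 := sub_ne_zero.mpr hq
  have hpq : ‖p - q‖ = ‖u - v‖ := by rw [hu, hv, sub_sub_sub_cancel_left, norm_sub_rev]
  have hsum : ‖u + v‖ ^ 2 = 2 * (‖u‖ ^ 2 + ‖v‖ ^ 2) - ‖u - v‖ ^ 2 := by
    linear_combination parallelogram_law_with_norm ℝ u v
  have hdiff : (u ^ 2)⁻¹ - (v ^ 2)⁻¹ = -((u - v) * (u + v)) / (u * v) ^ 2 := by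
    field_simp
    ring
  rw [hpq, ← hsum, hdiff]
  simp only [norm_mul, norm_div, norm_neg, norm_pow, norm_real, Real.norm_eq_abs, norm_I, norm_conj,
    mul_pow, div_pow, sq_abs]
  ring

theorem det_jacobianMatrix_vortexVelocity_inversion (θ c : ℝ) {R : ℝ} {p : ℂ} {x y : ℝ}
    (hR : R ≠ 0) (hp : p ≠ 0) (hz : ‖(⟨x, y⟩ : ℂ)‖ = R) (hzp : (⟨x, y⟩ : ℂ) ≠ p) :
    (jacobianMatrix (planarField (vortexVelocity θ c p (inversion 0 R p))) x y).det =
      θ ^ 2 * (1 - c ^ 2 * ((R ^ 2 - ‖p‖ ^ 2) ^ 2 *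
        (2 * ‖⟨x, y⟩ - p‖ ^ 2 * (R ^ 2 + ‖p‖ ^ 2) - (R ^ 2 - ‖p‖ ^ 2) ^ 2)) /
          ((‖⟨x, y⟩ - p‖ ^ 2) ^ 4 * R ^ 4)) := by
  have hp_norm : ‖p‖ ≠ 0 := norm_ne_zero_iff.mpr hp
  have hzp_norm : ‖⟨x, y⟩ - p‖ ≠ 0 := norm_sub_eq_zero_iff.not.mpr hzp
  have himage : ‖⟨x, y⟩ - inversion 0 R p‖ = R / ‖p‖ * ‖⟨x, y⟩ - p‖ := by
    simpa only [dist_eq_norm, sub_zero] using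
      dist_inversion_of_mem_sphere hR hp (mem_sphere_zero_iff_norm.mpr hz)
  have hgap : ‖p - inversion 0 R p‖ ^ 2 = (R ^ 2 - ‖p‖ ^ 2) ^ 2 / ‖p‖ ^ 2 := by
    simpa only [dist_eq_norm, sub_zero] using dist_self_inversion_sq (R := R) hp
  have hzq : (⟨x, y⟩ : ℂ) ≠ inversion 0 R p := by
    rw [← sub_ne_zero, ← norm_ne_zero_iff, himage]
    positivity
  rw [det_jacobianMatrix_vortexVelocity θ c hzp hzq, hgap, himage]
  field_simp
  ring

theorem det_jacobianMatrix_boundary_equilibrium (θ : ℝ) {c R : ℝ} {p : ℂ} {x y : ℝ}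
    (hc : c ≠ 0) (hR : R ≠ 0) (hp : p ≠ 0) (hpR : ‖p‖ ≠ R) (hz : ‖(⟨x, y⟩ : ℂ)‖ = R)
    (hzp : ‖⟨x, y⟩ - p‖ ^ 2 = c * (R ^ 2 - ‖p‖ ^ 2) / R ^ 2) :
    (jacobianMatrix (planarField (vortexVelocity θ c p (inversion 0 R p))) x y).det =
      (c * R - R ^ 3 - (c + R ^ 2) * ‖p‖) * (c * R - R ^ 3 + (c + R ^ 2) * ‖p‖) * θ ^ 2 /
        (c ^ 2 * (R ^ 2 - ‖p‖ ^ 2)) := by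
  have hd : R ^ 2 - ‖p‖ ^ 2 ≠ 0 := by
    rwa [sub_ne_zero, ne_comm, Ne, sq_eq_sq₀ (norm_nonneg p) (hz ▸ norm_nonneg _)]
  have hne : (⟨x, y⟩ : ℂ) ≠ p := by
    rw [← sub_ne_zero, ← norm_ne_zero_iff, ← pow_ne_zero_iff two_ne_zero, hzp]
    positivity
  rw [det_jacobianMatrix_vortexVelocity_inversion θ c hR hp hz hne, hzp]
  field_simp
  ring

theorem inversion_zero_ofReal (R r : ℝ) : inversion (0 : ℂ) R r = (R ^ 2 / r : ℝ) := by
  rcases eq_or_ne r 0 with rfl | hr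
  · simp
  · simp only [inversion, dist_zero_right, norm_real, Real.norm_eq_abs, div_pow, sq_abs,
      vsub_eq_sub, sub_zero, vadd_eq_add, add_zero, real_smul, ← ofReal_mul]
    congr 1
    field_simp

theorem planarField_vortexVelocity_ofReal (θ c p q x y : ℝ) :
    planarField (vortexVelocity θ c p q) x y =
      (-θ * y + c * θ * y * (1 / ((x - p) ^ 2 + y ^ 2) - 1 / ((x - q) ^ 2 + y ^ 2)),
       θ * x - c * θ *
        ((x - p) / ((x - p) ^ 2 + y ^ 2) - (x - q) / ((x - q) ^ 2 + y ^ 2))) := by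
  have conj_inv (t : ℝ) : conj (((⟨x, y⟩ : ℂ) - t)⁻¹) =
      ⟨(x - t) / ((x - t) ^ 2 + y ^ 2), y / ((x - t) ^ 2 + y ^ 2)⟩ := by
    apply Complex.ext <;> simp [normSq_apply, sq]
  simp only [planarField, vortexVelocity, map_sub, conj_inv, sub_re, sub_im, mul_re, mul_im, I_re,
    I_im, ofReal_re, ofReal_im]
  ext <;> ring

theorem norm_sub_ofReal_sq (x y r : ℝ) :
    ‖(⟨x, y⟩ : ℂ) - r‖ ^ 2 = ‖(⟨x, y⟩ : ℂ)‖ ^ 2 + r ^ 2 - 2 * r * x := by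
  simp only [Complex.sq_norm, normSq_apply, sub_re, sub_im, ofReal_re, ofReal_im]
  ring

section Equilibrium

variable {R r c x y : ℝ}

theorem norm_boundary_equilibrium (hR : 0 < R) (hr : r ≠ 0)
    (hx : x = (R ^ 2 + r ^ 2) / (2 * r) - c / (2 * r) * (1 - r ^ 2 / R ^ 2))
    (hy : y ^ 2 = 1 / 4 * (2 * (c ^ 2 + R ^ 4) / R ^ 2 - (c - R ^ 2) ^ 2 / r ^ 2 -
      (c + R ^ 2) ^ 2 * r ^ 2 / R ^ 4)) :
    ‖(⟨x, y⟩ : ℂ)‖ = R := by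
  rw [← sq_eq_sq₀ (norm_nonneg _) hR.le, Complex.sq_norm, normSq_apply, ← sq, ← sq, hx, hy]
  field_simp
  ring

theorem norm_boundary_equilibrium_sub_vortex_sq (hR : R ≠ 0) (hr : r ≠ 0)
    (hx : x = (R ^ 2 + r ^ 2) / (2 * r) - c / (2 * r) * (1 - r ^ 2 / R ^ 2))
    (hz : ‖(⟨x, y⟩ : ℂ)‖ = R) :
    ‖(⟨x, y⟩ : ℂ) - r‖ ^ 2 = c * (R ^ 2 - r ^ 2) / R ^ 2 := by
  rw [norm_sub_ofReal_sq, hz, hx]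
  field_simp
  ring

theorem saddle_factors_mul_neg (hR : 0 < R) (hc : 0 < c)
    (h : |(1 - R ^ 2 / c) / (1 + R ^ 2 / c)| < r / R) :
    (c * R - R ^ 3 - (c + R ^ 2) * r) * (c * R - R ^ 3 + (c + R ^ 2) * r) < 0 := by
  have hcR : 0 < c + R ^ 2 := by positivity
  have hratio : (1 - R ^ 2 / c) / (1 + R ^ 2 / c) = (c - R ^ 2) / (c + R ^ 2) := by
    field_simp
  have habs : |(c - R ^ 2) * R| < (c + R ^ 2) * r := by
    rw [hratio, abs_div, abs_of_pos hcR, div_lt_div_iff₀ hcR hR] at h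
    rwa [abs_mul, abs_of_pos hR, mul_comm (c + R ^ 2)]
  calc
    _ = ((c - R ^ 2) * R) ^ 2 - ((c + R ^ 2) * r) ^ 2 := by ring
    _ < 0 := sub_neg.mpr (sq_lt_sq' (abs_lt.mp habs).1 (abs_lt.mp habs).2)

end Equilibrium

/-- for `φ₀ > 0` and `ρ₀ > max{(1−φ₀)/(1+φ₀), (φ₀−1)/(1+φ₀)}`, the
determinant of the Jacobian of `X` at the boundary equilibria `(x_s*, ±y_s*)` equals
`(cR − R³ − (c + R²)r₀)(cR − R³ + (c + R²)r₀)θ₀²/(c²(R² − r₀²))`, and this value is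
negative, so `(x_s*, ±y_s*)` are hyperbolic saddles. -/
theorem boundary_saddles_jacobian_det
    (R r₀ θ₀ Γ : ℝ)
    (hR : 0 < R) (hr₀ : 0 < r₀) (hrR : r₀ < R) (hθ : θ₀ ≠ 0) (hΓ : Γ ≠ 0)
    (c ρ₀ φ₀ : ℝ) (hc : c = Γ / (2 * Real.pi * θ₀))
    (hρ : ρ₀ = r₀ / R) (hφ : φ₀ = R ^ 2 / c) (hφpos : 0 < φ₀)
    (hregion : max ((1 - φ₀) / (1 + φ₀)) ((φ₀ - 1) / (1 + φ₀)) < ρ₀)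
    (X : ℝ → ℝ → ℝ × ℝ)
    (hX : ∀ x y : ℝ, X x y =
      (-θ₀ * y + c * θ₀ * y *
          (1 / ((x - r₀) ^ 2 + y ^ 2) - 1 / ((x - R ^ 2 / r₀) ^ 2 + y ^ 2)),
       θ₀ * x - c * θ₀ *
          ((x - r₀) / ((x - r₀) ^ 2 + y ^ 2) -
            (x - R ^ 2 / r₀) / ((x - R ^ 2 / r₀) ^ 2 + y ^ 2))))
    (xs ys : ℝ)
    (hxs : xs = (R ^ 2 + r₀ ^ 2) / (2 * r₀) - (c / (2 * r₀)) * (1 - r₀ ^ 2 / R ^ 2))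
    (hys_pos : 0 < ys)
    (hys : ys ^ 2 = (1 / 4) * (2 * (c ^ 2 + R ^ 4) / R ^ 2 - (c - R ^ 2) ^ 2 / r₀ ^ 2 -
      (c + R ^ 2) ^ 2 * r₀ ^ 2 / R ^ 4))
    (D : ℝ)
    (hD : D = (c * R - R ^ 3 - (c + R ^ 2) * r₀) * (c * R - R ^ 3 + (c + R ^ 2) * r₀) *
      θ₀ ^ 2 / (c ^ 2 * (R ^ 2 - r₀ ^ 2))) :
    (jacobianMatrix X xs ys).det = D ∧ (jacobianMatrix X xs (-ys)).det = D ∧ D < 0 := by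
  have hc0 : 0 < c := by
    rw [hφ] at hφpos
    exact (div_pos_iff_of_pos_left (by positivity)).mp hφpos
  have hr_norm : ‖(r₀ : ℂ)‖ = r₀ := Complex.norm_of_nonneg hr₀.le
  have hX_vortex : X = planarField (vortexVelocity θ₀ c r₀ (inversion 0 R r₀)) := by
    funext x y
    rw [hX, inversion_zero_ofReal, planarField_vortexVelocity_ofReal]
  have hdet {y : ℝ} (hy : y ^ 2 = ys ^ 2) : (jacobianMatrix X xs y).det = D := by
    have hz := norm_boundary_equilibrium hR hr₀.ne' hxs (hy.trans hys)
    have hzr := norm_boundary_equilibrium_sub_vortex_sq hR.ne' hr₀.ne' hxs hz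
    rw [hX_vortex, det_jacobianMatrix_boundary_equilibrium θ₀ hc0.ne' hR.ne'
      (ofReal_ne_zero.mpr hr₀.ne') (hr_norm.trans_ne hrR.ne) hz (by rwa [hr_norm]), hr_norm, hD]
  refine ⟨hdet rfl, hdet (neg_sq ys), ?_⟩
  have hregion_abs : |(1 - R ^ 2 / c) / (1 + R ^ 2 / c)| < r₀ / R := by
    rwa [hρ, hφ, ← neg_sub 1 (R ^ 2 / c), neg_div, ← abs_eq_max_neg] at hregion
  have hgap : 0 < R ^ 2 - r₀ ^ 2 := sub_pos.mpr (by gcongr)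
  rw [hD]
  exact div_neg_of_neg_of_pos
    (mul_neg_of_neg_of_pos (saddle_factors_mul_neg hR hc0 hregion_abs) (by positivity))
    (by positivity)
end

section
/- Assume φ₀ > 0 and set λ = c·(r₀ − R²/r₀) and P(x) = x·(x − r₀)·(x − R²/r₀). Then: P(R) − λ > 0 if and only if ρ₀ > (φ₀ − 1)/(1 + φ₀); P(R) − λ = 0 if and only if ρ₀ = (φ₀ − 1)/(1 + φ₀); P(−R) − λ > 0 if and only if ρ₀ < (1 − φ₀)/(1 + φ₀); and P(−R) − λ = 0 if and only if ρ₀ = (1 − φ₀)/(1 + φ₀). -/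
/-!
At a point `x` with `x² = R²` the root `R² / r₀` of `P` equals `x² / r₀`, so both `P x` and `lam`
are multiples of `(x - r₀) / r₀`, and the remaining factor of `P x - lam` is affine in `r₀ / x`,
with its zero at `(φ₀ - 1) / (1 + φ₀)`. Take `x = R`, where `r₀ / x = ρ₀`, and `x = -R`, where
`r₀ / x = -ρ₀`.
-/

/-- The function `x ↦ P x - lam`, where `P` is the monic cubic with roots `0`, `a` and the
inverse point `R² / a` of `a` in the circle of radius `R`, and `lam = c (a - R² / a)`. -/
def shiftedCubic {K : Type*} [Field K] (R a c x : K) : K :=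
  x * (x - a) * (x - R ^ 2 / a) - c * (a - R ^ 2 / a)

section Field

variable {K : Type*} [Field K] {R a φ x : K}

theorem shiftedCubic_eq_mul (hxR : x ^ 2 = R ^ 2) (hx : x ≠ 0) (ha : a ≠ 0) (hφ : φ ≠ 0)
    (hφ' : 1 + φ ≠ 0) :
    shiftedCubic R a (R ^ 2 / φ) x =
      R ^ 2 * ((1 + φ) / φ) * (x * (x - a) / a) * (a / x - (φ - 1) / (1 + φ)) := by
  rw [shiftedCubic, ← hxR]
  field_simp
  ring

theorem shiftedCubic_eq_zero_iff (hxR : x ^ 2 = R ^ 2) (hx : x ≠ 0) (ha : a ≠ 0) (hxa : x ≠ a)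
    (hφ : φ ≠ 0) (hφ' : 1 + φ ≠ 0) :
    shiftedCubic R a (R ^ 2 / φ) x = 0 ↔ a / x = (φ - 1) / (1 + φ) := by
  have hR : R ^ 2 ≠ 0 := hxR ▸ pow_ne_zero 2 hx
  have hfactor : R ^ 2 * ((1 + φ) / φ) * (x * (x - a) / a) ≠ 0 :=
    mul_ne_zero (mul_ne_zero hR (div_ne_zero hφ' hφ))
      (div_ne_zero (mul_ne_zero hx (sub_ne_zero.mpr hxa)) ha)
  rw [shiftedCubic_eq_mul hxR hx ha hφ hφ', mul_eq_zero, or_iff_right hfactor, sub_eq_zero]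

end Field

section LinearOrderedField

variable {K : Type*} [Field K] [LinearOrder K] [IsStrictOrderedRing K]

theorem one_add_div_self_pos_iff {φ : K} : 0 < (1 + φ) / φ ↔ φ < -1 ∨ 0 < φ := by
  grind [div_pos_iff]

theorem shiftedCubic_pos_iff {R a φ x : K} (hxR : x ^ 2 = R ^ 2) (hxa : 0 < x * (x - a) / a)
    (hφ : φ < -1 ∨ 0 < φ) :
    0 < shiftedCubic R a (R ^ 2 / φ) x ↔ (φ - 1) / (1 + φ) < a / x := by
  have hx : x ≠ 0 := by rintro rfl; simp at hxa
  have ha : a ≠ 0 := by rintro rfl; simp at hxa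
  have hfactor : 0 < R ^ 2 * ((1 + φ) / φ) * (x * (x - a) / a) :=
    mul_pos (mul_pos (hxR ▸ sq_pos_of_ne_zero hx) (one_add_div_self_pos_iff.mpr hφ)) hxa
  rw [shiftedCubic_eq_mul hxR hx ha (by grind) (by grind), mul_pos_iff_of_pos_left hfactor,
    sub_pos]

theorem sign_of_P_at_boundary_general {R r₀ c ρ₀ φ₀ lam : K} {P : K → K}
    (hR : 0 < R) (hr₀ : 0 < r₀) (hrR : r₀ < R) (hρ : ρ₀ = r₀ / R) (hφ : φ₀ = R ^ 2 / c)
    (hφ₀ : φ₀ < -1 ∨ 0 < φ₀) (hlam : lam = c * (r₀ - R ^ 2 / r₀))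
    (hP : ∀ x, P x = x * (x - r₀) * (x - R ^ 2 / r₀)) :
    (0 < P R - lam ↔ (φ₀ - 1) / (1 + φ₀) < ρ₀) ∧
    (P R - lam = 0 ↔ ρ₀ = (φ₀ - 1) / (1 + φ₀)) ∧
    (0 < P (-R) - lam ↔ ρ₀ < (1 - φ₀) / (1 + φ₀)) ∧
    (P (-R) - lam = 0 ↔ ρ₀ = (1 - φ₀) / (1 + φ₀)) := by
  have hc : c = R ^ 2 / φ₀ := by rw [hφ, div_div_cancel₀ (pow_ne_zero 2 hR.ne')]
  have hshift (x : K) : P x - lam = shiftedCubic R r₀ (R ^ 2 / φ₀) x := by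
    rw [hP, hlam, hc, shiftedCubic]
  have hφ_ne : φ₀ ≠ 0 := by grind
  have hφ_ne' : 1 + φ₀ ≠ 0 := by grind
  have hneg : r₀ / -R = -ρ₀ := by rw [hρ, div_neg]
  have hthreshold : (1 - φ₀) / (1 + φ₀) = -((φ₀ - 1) / (1 + φ₀)) := by rw [← neg_div, neg_sub]
  have hpos : 0 < R * (R - r₀) / r₀ := div_pos (mul_pos hR (sub_pos.mpr hrR)) hr₀
  have hpos' : 0 < -R * (-R - r₀) / r₀ :=
    div_pos (mul_pos_of_neg_of_neg (by linarith) (by linarith)) hr₀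
  simp only [hshift]
  refine ⟨?_, ?_, ?_, ?_⟩
  · rw [shiftedCubic_pos_iff rfl hpos hφ₀, hρ]
  · rw [shiftedCubic_eq_zero_iff rfl hR.ne' hr₀.ne' hrR.ne' hφ_ne hφ_ne', hρ]
  · rw [shiftedCubic_pos_iff (neg_sq R) hpos' hφ₀, hneg, hthreshold, lt_neg]
  · rw [shiftedCubic_eq_zero_iff (neg_sq R) (neg_ne_zero.mpr hR.ne') hr₀.ne'
      (by linarith : -R < r₀).ne hφ_ne hφ_ne', hneg, hthreshold, neg_eq_iff_eq_neg]

end LinearOrderedField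

/-- for `φ₀ > 0`, the signs of `P(±R) − λ` are determined by the position
of `ρ₀` relative to `(φ₀ − 1)/(1 + φ₀)` and `(1 − φ₀)/(1 + φ₀)`. -/
theorem sign_of_P_at_boundary
    (R r₀ θ₀ Γ : ℝ)
    (hR : 0 < R) (hr₀ : 0 < r₀) (hrR : r₀ < R) (hθ : θ₀ ≠ 0) (hΓ : Γ ≠ 0)
    (c ρ₀ φ₀ : ℝ) (hc : c = Γ / (2 * Real.pi * θ₀))
    (hρ : ρ₀ = r₀ / R) (hφ : φ₀ = R ^ 2 / c) (hφpos : 0 < φ₀)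
    (lam : ℝ) (hlam : lam = c * (r₀ - R ^ 2 / r₀))
    (P : ℝ → ℝ) (hP : ∀ x : ℝ, P x = x * (x - r₀) * (x - R ^ 2 / r₀)) :
    (0 < P R - lam ↔ (φ₀ - 1) / (1 + φ₀) < ρ₀) ∧
    (P R - lam = 0 ↔ ρ₀ = (φ₀ - 1) / (1 + φ₀)) ∧
    (0 < P (-R) - lam ↔ ρ₀ < (1 - φ₀) / (1 + φ₀)) ∧
    (P (-R) - lam = 0 ↔ ρ₀ = (1 - φ₀) / (1 + φ₀)) :=
  sign_of_P_at_boundary_general hR hr₀ hrR hρ hφ (.inr hφpos) hlam hP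
end

section
/- Assume φ₀ < 0 and set λ = c·(r₀ − R²/r₀) > 0, P(x) = x·(x − r₀)·(x − R²/r₀), and x_M = (R² + r₀² − √(R⁴ − R²r₀² + r₀⁴))/(3r₀). Then f(ρ₀, φ₀) > 0 if and only if λ < P(x_M), and f(ρ₀, φ₀) = 0 if and only if λ = P(x_M). Moreover: if f(ρ₀, φ₀) < 0 then the equation P(x) = λ has no solution in [−R, R]; if f(ρ₀, φ₀) = 0 then x_M is its unique solution in [−R, R]; and if f(ρ₀, φ₀) > 0 then it has exactly two solutions in [−R, R], both lying in (0, r₀), one in (0, x_M) and one in (x_M, r₀). -/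
/-!
Let `P_{a,b}(x) = x (x - a) (x - b)`. It increases up to its smaller critical point and decreases
from there to the larger one, and for `a, b ≥ 0` the larger critical point is at least `√(a b)` by
AM-GM. When `b = R² / a`, the interval `[-R, R]` therefore lies in the region where `P_{a,b}` has
a single peak, and the number of solutions of `P_{a,b}(x) = λ` there depends only on the comparison
of `λ` with the peak value. Both `P_{a,b}` and its critical points are homogeneous in `(a, b, x)`,
and `f(ρ, φ) = 27 (ρ² (ρ² - 1) - φ M)`, where `M` is the peak value of `P_{ρ²,1}`. Since
`(r, R² / r) = (R² / r) (ρ², 1)` for `ρ = r / R`, the number `λ - P(x_M)` is a multiple of `f` with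
the sign of `c`.
-/

open Set

section StrictUnimodalOn

variable {α β : Type*} {f : α → β} {s : Set α} {m x x₁ x₂ p q : α} {y : β}

/-- Strict unimodality of `f` on `s`, with peak at `m ∈ s`: the shape of a function whose level
sets in `s` have at most two points. -/
structure StrictUnimodalOn [Preorder α] [Preorder β] (f : α → β) (s : Set α) (m : α) : Prop where
  peak_mem : m ∈ s
  strictMonoOn : StrictMonoOn f (s ∩ Iic m)
  strictAntiOn : StrictAntiOn f (s ∩ Ici m)

namespace StrictUnimodalOn

theorem apply_lt_peak [LinearOrder α] [Preorder β] (h : StrictUnimodalOn f s m) (hx : x ∈ s)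
    (hne : x ≠ m) : f x < f m := by
  rcases hne.lt_or_gt with hlt | hgt
  · exact h.strictMonoOn ⟨hx, hlt.le⟩ ⟨h.peak_mem, self_mem_Iic⟩ hlt
  · exact h.strictAntiOn ⟨h.peak_mem, self_mem_Ici⟩ ⟨hx, hgt.le⟩ hgt

theorem apply_le_peak [LinearOrder α] [Preorder β] (h : StrictUnimodalOn f s m) (hx : x ∈ s) :
    f x ≤ f m := by
  rcases eq_or_ne x m with rfl | hne
  · exact le_rfl
  · exact (h.apply_lt_peak hx hne).le

theorem apply_eq_peak_iff [LinearOrder α] [Preorder β] (h : StrictUnimodalOn f s m)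
    (hx : x ∈ s) : f x = f m ↔ x = m :=
  ⟨fun hfx ↦ by_contra fun hne ↦ (h.apply_lt_peak hx hne).ne hfx, congrArg f⟩

theorem eq_or_eq_of_apply_eq [LinearOrder α] [Preorder β] (h : StrictUnimodalOn f s m)
    (hx₁ : x₁ ∈ s ∩ Iic m) (hx₂ : x₂ ∈ s ∩ Ici m) (hx : x ∈ s) (hf₁ : f x = f x₁)
    (hf₂ : f x = f x₂) : x = x₁ ∨ x = x₂ :=
  (le_total x m).imp (fun hxm ↦ h.strictMonoOn.injOn ⟨hx, hxm⟩ hx₁ hf₁)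
    (fun hmx ↦ h.strictAntiOn.injOn ⟨hx, hmx⟩ hx₂ hf₂)

theorem exists_preimages_of_lt_peak [ConditionallyCompleteLinearOrder α] [TopologicalSpace α]
    [OrderTopology α] [DenselyOrdered α] [LinearOrder β] [TopologicalSpace β]
    [OrderClosedTopology β] (h : StrictUnimodalOn f s m) (hs : Icc p q ⊆ s)
    (hf : ContinuousOn f (Icc p q)) (hm : m ∈ Icc p q) (hp : f p < y) (hq : f q < y)
    (hy : y < f m) :
    ∃ x₁ ∈ Ioo p m, ∃ x₂ ∈ Ioo m q, f x₁ = y ∧ f x₂ = y ∧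
      ∀ x ∈ s, f x = y → x = x₁ ∨ x = x₂ := by
  obtain ⟨x₁, hx₁, hf₁⟩ :=
    intermediate_value_Ioo hm.1 (hf.mono (Icc_subset_Icc_right hm.2)) ⟨hp, hy⟩
  obtain ⟨x₂, hx₂, hf₂⟩ :=
    intermediate_value_Ioo' hm.2 (hf.mono (Icc_subset_Icc_left hm.1)) ⟨hq, hy⟩
  refine ⟨x₁, hx₁, x₂, hx₂, hf₁, hf₂, fun x hx hfx ↦ ?_⟩
  exact h.eq_or_eq_of_apply_eq ⟨hs ⟨hx₁.1.le, hx₁.2.le.trans hm.2⟩, hx₁.2.le⟩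
    ⟨hs ⟨hm.1.trans hx₂.1.le, hx₂.2.le⟩, hx₂.1.le⟩ hx (hfx.trans hf₁.symm) (hfx.trans hf₂.symm)

end StrictUnimodalOn

end StrictUnimodalOn

section RootCubic

/-- The monic cubic with roots `0`, `a` and `b`; the polynomial `P` of the theorem is
`rootCubic r₀ (R² / r₀)`. -/
def rootCubic (a b x : ℝ) : ℝ := x * (x - a) * (x - b)

/-- `3 / 2` times the distance between the critical points of `rootCubic a b`, that is, the square
root of a quarter of the discriminant of its derivative. -/
noncomputable def rootCubicGap (a b : ℝ) : ℝ := √(a ^ 2 - a * b + b ^ 2)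

/-- The smaller critical point of `rootCubic a b`, the point `x_M` of the theorem. -/
noncomputable def rootCubicArgmax (a b : ℝ) : ℝ := (a + b - rootCubicGap a b) / 3

/-- The larger critical point of `rootCubic a b`, where the decrease after the peak ends. -/
noncomputable def rootCubicArgmin (a b : ℝ) : ℝ := (a + b + rootCubicGap a b) / 3

variable {a b k : ℝ}

theorem rootCubicGap_nonneg (a b : ℝ) : 0 ≤ rootCubicGap a b := Real.sqrt_nonneg _

theorem sq_rootCubicGap (a b : ℝ) : rootCubicGap a b ^ 2 = a ^ 2 - a * b + b ^ 2 :=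
  Real.sq_sqrt (by nlinarith [sq_nonneg (a - b), sq_nonneg (a + b)])

theorem rootCubicArgmax_le_rootCubicArgmin (a b : ℝ) :
    rootCubicArgmax a b ≤ rootCubicArgmin a b := by
  unfold rootCubicArgmax rootCubicArgmin
  linarith [rootCubicGap_nonneg a b]

theorem rootCubicArgmax_pos (ha : 0 < a) (hb : 0 < b) : 0 < rootCubicArgmax a b := by
  have hgap : rootCubicGap a b < a + b :=
    lt_of_pow_lt_pow_left₀ 2 (by positivity) (by nlinarith [sq_rootCubicGap a b, mul_pos ha hb])
  unfold rootCubicArgmax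
  linarith

theorem rootCubicArgmax_lt_left (ha : 0 < a) (hab : a < b) : rootCubicArgmax a b < a := by
  have hgap : b - 2 * a < rootCubicGap a b :=
    lt_of_pow_lt_pow_left₀ 2 (rootCubicGap_nonneg a b)
      (by nlinarith [sq_rootCubicGap a b, mul_pos ha (sub_pos.2 hab)])
  unfold rootCubicArgmax
  linarith

theorem le_rootCubicArgmin_of_sq_le_mul {x : ℝ} (ha : 0 ≤ a) (hb : 0 ≤ b) (hx : x ^ 2 ≤ a * b) :
    x ≤ rootCubicArgmin a b := by
  have hmean : 2 * x ≤ a + b :=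
    le_of_sq_le_sq (by nlinarith [sq_nonneg (a - b)]) (by positivity)
  have hgap : x ≤ rootCubicGap a b :=
    le_of_sq_le_sq (by nlinarith [sq_rootCubicGap a b, sq_nonneg (a - b)])
      (rootCubicGap_nonneg a b)
  unfold rootCubicArgmin
  linarith

theorem hasDerivAt_rootCubic (a b x : ℝ) :
    HasDerivAt (rootCubic a b)
      (3 * (x - rootCubicArgmax a b) * (x - rootCubicArgmin a b)) x := by
  have hprod := ((hasDerivAt_id' x).mul ((hasDerivAt_id' x).sub_const a)).mul
    ((hasDerivAt_id' x).sub_const b)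
  refine hprod.congr_deriv ?_
  simp only [Pi.mul_apply]
  unfold rootCubicArgmax rootCubicArgmin
  linear_combination sq_rootCubicGap a b / 3

theorem continuous_rootCubic (a b : ℝ) : Continuous (rootCubic a b) := by
  unfold rootCubic
  fun_prop

theorem strictUnimodalOn_rootCubic (a b : ℝ) :
    StrictUnimodalOn (rootCubic a b) (Iic (rootCubicArgmin a b)) (rootCubicArgmax a b) where
  peak_mem := rootCubicArgmax_le_rootCubicArgmin a b
  strictMonoOn := by
    have hmono : StrictMonoOn (rootCubic a b) (Iic (rootCubicArgmax a b)) := by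
      refine strictMonoOn_of_deriv_pos (convex_Iic _) (continuous_rootCubic a b).continuousOn ?_
      intro x hx
      rw [interior_Iic, mem_Iio] at hx
      rw [(hasDerivAt_rootCubic a b x).deriv]
      have hx' : x < rootCubicArgmin a b := hx.trans_le (rootCubicArgmax_le_rootCubicArgmin a b)
      exact mul_pos_of_neg_of_neg (by linarith) (by linarith)
    exact hmono.mono inter_subset_right
  strictAntiOn := by
    rw [inter_comm, Ici_inter_Iic]
    refine strictAntiOn_of_deriv_neg (convex_Icc _ _) (continuous_rootCubic a b).continuousOn ?_
    intro x hx
    rw [interior_Icc] at hx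
    rw [(hasDerivAt_rootCubic a b x).deriv]
    exact mul_neg_of_pos_of_neg (by linarith [hx.1]) (by linarith [hx.2])

theorem rootCubic_rootCubicArgmax (a b : ℝ) :
    27 * rootCubic a b (rootCubicArgmax a b) =
      2 * rootCubicGap a b ^ 3 - (a + b) * (2 * a ^ 2 - 5 * a * b + 2 * b ^ 2) := by
  unfold rootCubic rootCubicArgmax
  linear_combination -3 * rootCubicGap a b * sq_rootCubicGap a b

theorem rootCubic_mul (k a b x : ℝ) :
    rootCubic (k * a) (k * b) (k * x) = k ^ 3 * rootCubic a b x := by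
  unfold rootCubic
  ring

theorem rootCubicGap_mul (hk : 0 ≤ k) (a b : ℝ) :
    rootCubicGap (k * a) (k * b) = k * rootCubicGap a b := by
  unfold rootCubicGap
  rw [← Real.sqrt_sq hk, ← Real.sqrt_mul (sq_nonneg k), Real.sqrt_sq hk]
  ring_nf

theorem rootCubicArgmax_mul (hk : 0 ≤ k) (a b : ℝ) :
    rootCubicArgmax (k * a) (k * b) = k * rootCubicArgmax a b := by
  unfold rootCubicArgmax
  rw [rootCubicGap_mul hk]
  ring

end RootCubic

section SaddleNode

/-- The function `f(ρ, φ)` whose zeros mark the saddle-node transition. -/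
noncomputable def saddleNodeFun (ρ φ : ℝ) : ℝ :=
  27 * ρ ^ 2 * (ρ ^ 2 - 1) +
    φ * (2 - 3 * ρ ^ 2 - 3 * ρ ^ 4 + 2 * ρ ^ 6 - 2 * (1 - ρ ^ 2 + ρ ^ 4) ^ ((3 : ℝ) / 2))

theorem rpow_three_halves_eq_rootCubicGap_pow (ρ : ℝ) :
    (1 - ρ ^ 2 + ρ ^ 4) ^ ((3 : ℝ) / 2) = rootCubicGap (ρ ^ 2) 1 ^ 3 := by
  have hbase : 0 ≤ 1 - ρ ^ 2 + ρ ^ 4 := by nlinarith [sq_nonneg (ρ ^ 2 - 1)]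
  rw [Real.rpow_div_two_eq_sqrt 3 hbase, Real.rpow_ofNat]
  unfold rootCubicGap
  ring_nf

theorem saddleNodeFun_eq (ρ φ : ℝ) :
    saddleNodeFun ρ φ =
      27 * (ρ ^ 2 * (ρ ^ 2 - 1) - φ * rootCubic (ρ ^ 2) 1 (rootCubicArgmax (ρ ^ 2) 1)) := by
  unfold saddleNodeFun
  rw [rpow_three_halves_eq_rootCubicGap_pow]
  linear_combination φ * rootCubic_rootCubicArgmax (ρ ^ 2) 1

variable {R r c : ℝ}

theorem rootCubicArgmax_sq_div (hr : 0 < r) (R : ℝ) :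
    rootCubicArgmax r (R ^ 2 / r) =
      (R ^ 2 + r ^ 2 - √(R ^ 4 - R ^ 2 * r ^ 2 + r ^ 4)) / (3 * r) := by
  have hscale := rootCubicArgmax_mul (inv_nonneg.2 hr.le) (r ^ 2) (R ^ 2)
  rw [show r⁻¹ * r ^ 2 = r by field_simp, inv_mul_eq_div r (R ^ 2)] at hscale
  rw [hscale, rootCubicArgmax, rootCubicGap]
  field_simp
  ring_nf

theorem rootCubic_peak_sq_div (hR : R ≠ 0) (hr : 0 < r) :
    rootCubic r (R ^ 2 / r) (rootCubicArgmax r (R ^ 2 / r)) = (R ^ 2 / r) ^ 3 *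
      rootCubic ((r / R) ^ 2) 1 (rootCubicArgmax ((r / R) ^ 2) 1) := by
  have hk : 0 ≤ R ^ 2 / r := by positivity
  rw [← rootCubic_mul, ← rootCubicArgmax_mul hk, mul_one,
    show R ^ 2 / r * (r / R) ^ 2 = r by field_simp]

theorem sub_peak_eq_mul_saddleNodeFun (hR : R ≠ 0) (hr : 0 < r) (hc : c ≠ 0) :
    c * (r - R ^ 2 / r) - rootCubic r (R ^ 2 / r) (rootCubicArgmax r (R ^ 2 / r)) =
      c * R ^ 4 / (27 * r ^ 3) * saddleNodeFun (r / R) (R ^ 2 / c) := by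
  rw [rootCubic_peak_sq_div hR hr, saddleNodeFun_eq]
  field_simp

theorem saddleNodeFun_pos_iff (hR : R ≠ 0) (hr : 0 < r) (hc : c < 0) :
    0 < saddleNodeFun (r / R) (R ^ 2 / c) ↔
      c * (r - R ^ 2 / r) < rootCubic r (R ^ 2 / r) (rootCubicArgmax r (R ^ 2 / r)) := by
  have hcoef : c * R ^ 4 / (27 * r ^ 3) < 0 :=
    div_neg_of_neg_of_pos (mul_neg_of_neg_of_pos hc (by positivity)) (by positivity)
  rw [← sub_neg (a := c * _), sub_peak_eq_mul_saddleNodeFun hR hr hc.ne]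
  exact (smul_neg_iff_of_neg_left hcoef).symm

theorem saddleNodeFun_eq_zero_iff (hR : R ≠ 0) (hr : 0 < r) (hc : c ≠ 0) :
    saddleNodeFun (r / R) (R ^ 2 / c) = 0 ↔
      c * (r - R ^ 2 / r) = rootCubic r (R ^ 2 / r) (rootCubicArgmax r (R ^ 2 / r)) := by
  have hcoef : c * R ^ 4 / (27 * r ^ 3) ≠ 0 := by positivity
  rw [← sub_eq_zero (a := c * _), sub_peak_eq_mul_saddleNodeFun hR hr hc,
    mul_eq_zero_iff_left hcoef]

end SaddleNode

/-- for `φ₀ < 0` the sign of `f(ρ₀, φ₀)` decides the relative position of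
`λ = c(r₀ − R²/r₀) > 0` and the local maximum value `P(x_M)`, and hence the number of
solutions of `P(x) = λ` in `[−R, R]`. -/
theorem saddle_node_root_count
    (R r₀ θ₀ Γ : ℝ)
    (hR : 0 < R) (hr₀ : 0 < r₀) (hrR : r₀ < R) (hθ : θ₀ ≠ 0) (hΓ : Γ ≠ 0)
    (c ρ₀ φ₀ : ℝ) (hc : c = Γ / (2 * Real.pi * θ₀))
    (hρ : ρ₀ = r₀ / R) (hφ : φ₀ = R ^ 2 / c) (hφneg : φ₀ < 0)
    (fval : ℝ)
    (hf : fval = 27 * ρ₀ ^ 2 * (ρ₀ ^ 2 - 1) +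
      φ₀ * (2 - 3 * ρ₀ ^ 2 - 3 * ρ₀ ^ 4 + 2 * ρ₀ ^ 6 -
        2 * (1 - ρ₀ ^ 2 + ρ₀ ^ 4) ^ ((3 : ℝ) / 2)))
    (lam : ℝ) (hlam : lam = c * (r₀ - R ^ 2 / r₀))
    (P : ℝ → ℝ) (hP : ∀ x : ℝ, P x = x * (x - r₀) * (x - R ^ 2 / r₀))
    (xM : ℝ)
    (hxM : xM = (R ^ 2 + r₀ ^ 2 - Real.sqrt (R ^ 4 - R ^ 2 * r₀ ^ 2 + r₀ ^ 4)) / (3 * r₀)) :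
    0 < lam ∧
    (0 < fval ↔ lam < P xM) ∧
    (fval = 0 ↔ lam = P xM) ∧
    (fval < 0 → ∀ x ∈ Set.Icc (-R) R, P x ≠ lam) ∧
    (fval = 0 → ∀ x ∈ Set.Icc (-R) R, (P x = lam ↔ x = xM)) ∧
    (0 < fval → ∃ x₁ x₂ : ℝ, 0 < x₁ ∧ x₁ < xM ∧ xM < x₂ ∧ x₂ < r₀ ∧
      P x₁ = lam ∧ P x₂ = lam ∧
      ∀ x ∈ Set.Icc (-R) R, P x = lam → x = x₁ ∨ x = x₂) := by
  obtain rfl : P = rootCubic r₀ (R ^ 2 / r₀) := funext hP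
  rw [← rootCubicArgmax_sq_div hr₀] at hxM
  have hc_neg : c < 0 :=
    lt_of_not_ge fun hc_nonneg ↦ hφneg.not_ge (hφ ▸ div_nonneg (sq_nonneg R) hc_nonneg)
  have hr_lt : r₀ < R ^ 2 / r₀ := by rw [lt_div_iff₀ hr₀]; nlinarith
  have hlam_pos : 0 < lam := hlam ▸ mul_pos_of_neg_of_neg hc_neg (sub_neg.2 hr_lt)
  have hpos_iff : 0 < fval ↔ lam < rootCubic r₀ (R ^ 2 / r₀) xM := by
    rw [hf, hρ, hφ, hlam, hxM]; exact saddleNodeFun_pos_iff hR.ne' hr₀ hc_neg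
  have hzero_iff : fval = 0 ↔ lam = rootCubic r₀ (R ^ 2 / r₀) xM := by
    rw [hf, hρ, hφ, hlam, hxM]; exact saddleNodeFun_eq_zero_iff hR.ne' hr₀ hc_neg.ne
  have hxM_mem : xM ∈ Ioo 0 r₀ :=
    hxM ▸ ⟨rootCubicArgmax_pos hr₀ (by positivity), rootCubicArgmax_lt_left hr₀ hr_lt⟩
  have hunimodal := hxM ▸ strictUnimodalOn_rootCubic r₀ (R ^ 2 / r₀)
  have hR_le : R ≤ rootCubicArgmin r₀ (R ^ 2 / r₀) :=
    le_rootCubicArgmin_of_sq_le_mul hr₀.le (by positivity) (mul_div_cancel₀ _ hr₀.ne').ge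
  refine ⟨hlam_pos, hpos_iff, hzero_iff, fun hneg x hx ↦ ?_, fun hzero x hx ↦ ?_, fun hpos ↦ ?_⟩
  · have hpeak_lt := (not_lt.1 (mt hpos_iff.2 hneg.not_gt)).lt_of_ne' (mt hzero_iff.2 hneg.ne)
    exact ((hunimodal.apply_le_peak (hx.2.trans hR_le)).trans_lt hpeak_lt).ne
  · rw [hzero_iff.1 hzero, hunimodal.apply_eq_peak_iff (hx.2.trans hR_le)]
  · obtain ⟨x₁, hx₁, x₂, hx₂, hP₁, hP₂, honly⟩ := hunimodal.exists_preimages_of_lt_peak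
      (fun x hx ↦ hx.2.trans (hrR.le.trans hR_le)) (continuous_rootCubic _ _).continuousOn
      (Ioo_subset_Icc_self hxM_mem) (by simpa [rootCubic]) (by simpa [rootCubic]) (hpos_iff.1 hpos)
    exact ⟨x₁, x₂, hx₁.1, hx₁.2, hx₂.1, hx₂.2, hP₁, hP₂, fun x hx ↦ honly x (hx.2.trans hR_le)⟩
end

section
/- Assume φ₀ > 0 and ρ₀ > max{(1 − φ₀)/(1 + φ₀), (φ₀ − 1)/(1 + φ₀)}. Then the set of critical points of X in the closed disk D_R consists of exactly three points: a point (x_c, 0) with x_c ∈ (−R, 0) at which det DX > 0 (a center), and the two points (x_s*, y_s*) and (x_s*, −y_s*) lying on the boundary circle x² + y² = R², at which det DX < 0 (hyperbolic saddles), where x_s* = (R² + r₀²)/(2r₀) − (c/(2r₀))·(1 − r₀²/R²) and (y_s*)² = (1/4)·(2(c² + R⁴)/R² − (c − R²)²/r₀² − (c + R²)²·r₀²/R⁴). (Case (b) of Theorem 1.) -/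
/-!
Identify the plane with `ℂ` and put `b = R² / r₀`, `f z = c (1 / (z - r₀) - 1 / (z - b))`, so that
`X` is the field `i θ₀ (z - conj (f z))`. Its critical points solve `f z = conj z`, that is
`conj z (z - r₀) (z - b) = -c (b - r₀)`. The imaginary part of the left side is
`Im z (|z|² - r₀ b)`, so a critical point lies on the real axis, where it solves a cubic, or on the
circle `|z|² = r₀ b = R²`, where the equation is linear in `Re z`. The assumption on `ρ₀` says that
the values of the cubic at `-R` and `R` lie below and above `-c (b - r₀)`. This is also the
condition for the solution `Re z` of the linear equation to lie strictly between `-R` and `R`.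

As `f` is holomorphic, `det DX = θ₀² (1 - |f'|²)`, and at a critical point
`|f'| = |z (2 z - r₀ - b)| / |(z - r₀) (z - b)|`.
-/

open Complex ComplexConjugate

/-- The planar vector field `i θ (z - conj (f z))`: the velocity, seen in a rotating frame, of a
flow with complex velocity proportional to `f`. -/
noncomputable def corotatingField (θ : ℝ) (f : ℂ → ℂ) (x y : ℝ) : ℝ × ℝ :=
  (-θ * (y + (f ⟨x, y⟩).im), θ * (x - (f ⟨x, y⟩).re))

lemma corotatingField_eq_zero_iff {θ : ℝ} (hθ : θ ≠ 0) {f : ℂ → ℂ} {z : ℂ} :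
    corotatingField θ f z.re z.im = (0, 0) ↔ f z = conj z := by
  simp only [corotatingField, eta, Prod.mk.injEq, mul_eq_zero, neg_eq_zero, hθ, false_or,
    Complex.ext_iff, conj_re, conj_im]
  constructor <;> rintro ⟨h₁, h₂⟩ <;> constructor <;> linarith

lemma det_jacobianMatrix_corotatingField (θ : ℝ) {f : ℂ → ℂ} {f' z : ℂ} (hf : HasDerivAt f f' z) :
    (jacobianMatrix (corotatingField θ f) z.re z.im).det = θ ^ 2 * (1 - normSq f') := by
  have hline_x : HasDerivAt (fun s : ℝ => (⟨s, z.im⟩ : ℂ)) 1 z.re := by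
    simpa [mk_eq_add_mul_I] using (hasDerivAt_id z.re).ofReal_comp.add_const (z.im * I)
  have hline_y : HasDerivAt (fun s : ℝ => (⟨z.re, s⟩ : ℂ)) I z.im := by
    simpa [mk_eq_add_mul_I] using
      ((hasDerivAt_id z.im).ofReal_comp.mul_const I).const_add (z.re : ℂ)
  have hx : HasDerivAt (fun s : ℝ => f ⟨s, z.im⟩) f' z.re := by
    simpa [Function.comp_def] using hf.comp z.re hline_x
  have hy : HasDerivAt (fun s : ℝ => f ⟨z.re, s⟩) (f' * I) z.im :=
    hf.comp z.im hline_y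
  have hx_re := reCLM.hasFDerivAt.comp_hasDerivAt z.re hx
  have hx_im := imCLM.hasFDerivAt.comp_hasDerivAt z.re hx
  have hy_re := reCLM.hasFDerivAt.comp_hasDerivAt z.im hy
  have hy_im := imCLM.hasFDerivAt.comp_hasDerivAt z.im hy
  have h₁₁ := ((hx_im.const_add z.im).const_mul (-θ)).deriv
  have h₁₂ := (((hasDerivAt_id z.im).add hy_im).const_mul (-θ)).deriv
  have h₂₁ := (((hasDerivAt_id z.re).sub hx_re).const_mul θ).deriv
  have h₂₂ := ((hy_re.const_sub z.re).const_mul θ).deriv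
  simp only [Function.comp_def, id, Pi.add_apply, Pi.sub_apply, reCLM_apply, imCLM_apply,
    mul_I_re, mul_I_im] at h₁₁ h₁₂ h₂₁ h₂₂
  simp only [jacobianMatrix, corotatingField, Matrix.det_fin_two_of, normSq_apply]
  rw [h₁₁, h₁₂, h₂₁, h₂₂]
  ring

/-- The complex velocity, up to a constant factor, of two opposite point vortices on the real axis
at `r` and `b`. -/
noncomputable def vortexPair (c r b : ℝ) (z : ℂ) : ℂ :=
  c * ((z - r)⁻¹ - (z - b)⁻¹)

/-- A critical point of the corotating field of a vortex pair. The singular points are excluded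
explicitly because the inverse of zero is zero in Lean. -/
def IsVortexEquilibrium (c r b : ℝ) (z : ℂ) : Prop :=
  z ≠ r ∧ z ≠ b ∧ vortexPair c r b z = conj z

lemma corotatingField_vortexPair (θ c r b x y : ℝ) :
    corotatingField θ (vortexPair c r b) x y =
      (-θ * y + c * θ * y * (1 / ((x - r) ^ 2 + y ^ 2) - 1 / ((x - b) ^ 2 + y ^ 2)),
       θ * x - c * θ * ((x - r) / ((x - r) ^ 2 + y ^ 2) - (x - b) / ((x - b) ^ 2 + y ^ 2))) := by
  simp only [corotatingField, vortexPair, re_ofReal_mul, im_ofReal_mul, sub_re, sub_im, inv_re,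
    inv_im, ofReal_re, ofReal_im, normSq_apply, sub_zero, ← sq]
  ext <;> ring

section Equilibria

variable {c r b : ℝ} {z : ℂ}

lemma vortexPair_eq_div (hr : z ≠ r) (hb : z ≠ b) :
    vortexPair c r b z = -(c * (b - r)) / ((z - r) * (z - b)) := by
  have hr' := sub_ne_zero.2 hr
  have hb' := sub_ne_zero.2 hb
  rw [vortexPair]
  field_simp
  ring

lemma hasDerivAt_vortexPair (hr : z ≠ r) (hb : z ≠ b) :
    HasDerivAt (vortexPair c r b)
      (c * (b - r) * (2 * z - r - b) / ((z - r) * (z - b)) ^ 2) z := by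
  have hr' := sub_ne_zero.2 hr
  have hb' := sub_ne_zero.2 hb
  have h := ((((hasDerivAt_id z).sub_const (r : ℂ)).inv hr').sub
    (((hasDerivAt_id z).sub_const (b : ℂ)).inv hb')).const_mul (c : ℂ)
  refine h.congr_deriv ?_
  simp only [id]
  field_simp
  ring

lemma conj_mul_sub_mul_sub (r b : ℝ) (z : ℂ) :
    conj z * ((z - r) * (z - b)) =
      ⟨(z.re ^ 2 + z.im ^ 2) * (z.re - r - b) + r * b * z.re,
        z.im * (z.re ^ 2 + z.im ^ 2 - r * b)⟩ := by
  apply Complex.ext <;> simp only [mul_re, mul_im, sub_re, sub_im, conj_re, conj_im, ofReal_re,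
    ofReal_im] <;> ring

lemma isVortexEquilibrium_iff_conj_mul_eq (hκ : c * (b - r) ≠ 0) :
    IsVortexEquilibrium c r b z ↔
      conj z * ((z - r) * (z - b)) = ((-(c * (b - r)) : ℝ) : ℂ) := by
  constructor
  · rintro ⟨hr, hb, h⟩
    rw [← h, vortexPair_eq_div hr hb,
      div_mul_cancel₀ _ (mul_ne_zero (sub_ne_zero.2 hr) (sub_ne_zero.2 hb))]
    push_cast
    rfl
  · intro h
    have hne : conj z * ((z - r) * (z - b)) ≠ 0 := by
      rw [h]
      exact ofReal_ne_zero.2 (neg_ne_zero.2 hκ)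
    have hq := right_ne_zero_of_mul hne
    have hr : z ≠ r := sub_ne_zero.1 (left_ne_zero_of_mul hq)
    have hb : z ≠ b := sub_ne_zero.1 (right_ne_zero_of_mul hq)
    refine ⟨hr, hb, ?_⟩
    rw [vortexPair_eq_div hr hb, div_eq_iff hq, h]
    push_cast
    rfl

lemma isVortexEquilibrium_iff (hκ : c * (b - r) ≠ 0) :
    IsVortexEquilibrium c r b z ↔
      (z.im = 0 ∧ z.re * (z.re - r) * (z.re - b) = -(c * (b - r))) ∨
      (z.re ^ 2 + z.im ^ 2 = r * b ∧ r * b * (r + b - 2 * z.re) = c * (b - r)) := by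
  rw [isVortexEquilibrium_iff_conj_mul_eq hκ, conj_mul_sub_mul_sub, Complex.ext_iff]
  simp only [ofReal_re, ofReal_im, mul_eq_zero, sub_eq_zero]
  constructor
  · rintro ⟨hre, him | hcircle⟩
    · refine .inl ⟨him, ?_⟩
      rw [him] at hre
      linarith
    · refine .inr ⟨hcircle, ?_⟩
      rw [hcircle] at hre
      linarith
  · rintro (⟨him, hcubic⟩ | ⟨hcircle, hlinear⟩)
    · refine ⟨?_, .inl him⟩
      rw [him]
      linarith
    · refine ⟨?_, .inr hcircle⟩
      rw [hcircle]
      linarith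

lemma isVortexEquilibrium_of_corotatingField_eq_zero {θ : ℝ} (hθ : θ ≠ 0) (hr : z ≠ r)
    (hb : z.re ^ 2 + z.im ^ 2 < b ^ 2)
    (h : corotatingField θ (vortexPair c r b) z.re z.im = (0, 0)) :
    IsVortexEquilibrium c r b z := by
  refine ⟨hr, ?_, (corotatingField_eq_zero_iff hθ).1 h⟩
  rintro rfl
  simp at hb

namespace IsVortexEquilibrium

lemma corotatingField_eq_zero (h : IsVortexEquilibrium c r b z) (θ : ℝ) :
    corotatingField θ (vortexPair c r b) z.re z.im = (0, 0) := by
  simp [corotatingField, h.2.2]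

lemma sub_mul_sub_ne_zero (h : IsVortexEquilibrium c r b z) : (z - r) * (z - b) ≠ 0 :=
  mul_ne_zero (sub_ne_zero.2 h.1) (sub_ne_zero.2 h.2.1)

lemma det_jacobianMatrix (h : IsVortexEquilibrium c r b z) (θ : ℝ) :
    (jacobianMatrix (corotatingField θ (vortexPair c r b)) z.re z.im).det =
      θ ^ 2 * (1 - normSq (z * (2 * z - r - b)) / normSq ((z - r) * (z - b))) := by
  have hderiv : (c * (b - r) * (2 * z - r - b) / ((z - r) * (z - b)) ^ 2 : ℂ) =
      -(conj z * (2 * z - r - b) / ((z - r) * (z - b))) := by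
    rw [← h.2.2, vortexPair_eq_div h.1 h.2.1]
    field_simp
  rw [det_jacobianMatrix_corotatingField θ (hasDerivAt_vortexPair h.1 h.2.1), hderiv, normSq_neg,
    normSq_div, normSq_mul, normSq_conj, normSq_mul z]

lemma det_jacobianMatrix_pos (h : IsVortexEquilibrium c r b z) {θ : ℝ} (hθ : θ ≠ 0)
    (hrb : 0 < r + b) (him : z.im = 0) (hneg : z.re < 0) (hlt : z.re ^ 2 < r * b) :
    0 < (jacobianMatrix (corotatingField θ (vortexPair c r b)) z.re z.im).det := by
  obtain ⟨x, rfl⟩ : ∃ x : ℝ, z = x := ⟨z.re, Complex.ext rfl him⟩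
  rw [ofReal_re] at hneg hlt
  have hpos : 0 < x * (2 * x - r - b) := mul_pos_of_neg_of_neg hneg (by linarith)
  have hnormSq : normSq (x * (2 * x - r - b)) < normSq ((x - r) * (x - b)) := by
    have hsq : (x * (2 * x - r - b)) ^ 2 < ((x - r) * (x - b)) ^ 2 :=
      pow_lt_pow_left₀ (by linarith) hpos.le two_ne_zero
    rw [sq, sq, ← normSq_ofReal, ← normSq_ofReal] at hsq
    exact_mod_cast hsq
  rw [h.det_jacobianMatrix]
  have hden := normSq_pos.2 h.sub_mul_sub_ne_zero
  exact mul_pos (by positivity) (sub_pos.2 ((div_lt_one hden).2 hnormSq))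

lemma det_jacobianMatrix_neg (h : IsVortexEquilibrium c r b z) {θ : ℝ} (hθ : θ ≠ 0)
    (him : z.im ≠ 0) (hcircle : z.re ^ 2 + z.im ^ 2 = r * b) :
    (jacobianMatrix (corotatingField θ (vortexPair c r b)) z.re z.im).det < 0 := by
  have hrb : 0 < r * b := hcircle ▸ by positivity
  have hnormSq : normSq z = r * b := by rw [normSq_apply, ← sq, ← sq, hcircle]
  have hnum : normSq (2 * z - r - b) = (2 * z.re - r - b) ^ 2 + 4 * z.im ^ 2 := by
    simp only [normSq_apply, sub_re, sub_im, mul_re, mul_im, re_ofNat, im_ofNat, ofReal_re,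
      ofReal_im]
    ring
  have hden : normSq ((z - r) * (z - b)) = r * b * (2 * z.re - r - b) ^ 2 := by
    have hreal : conj z * ((z - r) * (z - b)) = ((r * b * (2 * z.re - r - b) : ℝ) : ℂ) := by
      rw [conj_mul_sub_mul_sub, hcircle]
      apply Complex.ext <;> simp only [ofReal_re, ofReal_im] <;> ring
    have hprod := congrArg normSq hreal
    rw [normSq_mul, normSq_conj, hnormSq, normSq_ofReal] at hprod
    exact mul_left_cancel₀ hrb.ne' (by linarith)
  have hlt : normSq ((z - r) * (z - b)) < normSq (z * (2 * z - r - b)) := by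
    rw [normSq_mul z, hden, hnormSq, hnum]
    exact mul_lt_mul_of_pos_left (lt_add_of_pos_right _ (by positivity)) hrb
  rw [h.det_jacobianMatrix]
  have hone := (one_lt_div (normSq_pos.2 h.sub_mul_sub_ne_zero)).2 hlt
  exact mul_neg_of_pos_of_neg (by positivity) (sub_neg.2 hone)

end IsVortexEquilibrium

end Equilibria

section Cubic

variable {R r b k x : ℝ}

lemma strictMonoOn_mul_sub_mul_sub (hsum : 0 ≤ r + b) (hprod : 0 < r * b) :
    StrictMonoOn (fun x : ℝ => x * (x - r) * (x - b)) (Set.Iic 0) := by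
  intro x hx y hy hxy
  rw [Set.mem_Iic] at hx hy
  have hfactor : y * (y - r) * (y - b) - x * (x - r) * (x - b) =
      (y - x) * (x ^ 2 + x * y + y ^ 2 + (r + b) * (-x - y) + r * b) := by ring
  have hxy' : 0 ≤ x * y := mul_nonneg_of_nonpos_of_nonpos hx hy
  have hlin : 0 ≤ (r + b) * (-x - y) := mul_nonneg hsum (by linarith)
  exact sub_pos.1 (hfactor ▸ mul_pos (sub_pos.2 hxy) (by positivity))

lemma mul_sub_mul_sub_le_of_mem_Icc (hrb : r * b = R ^ 2) (hsum : 2 * R ≤ r + b)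
    (hx : x ∈ Set.Icc 0 R) :
    R * (R - r) * (R - b) ≤ x * (x - r) * (x - b) := by
  obtain ⟨hx0, hxR⟩ := hx
  have hfactor : x * (x - r) * (x - b) - R * (R - r) * (R - b) =
      (R - x) * ((r + b - 2 * R) * (x + R) + x * (R - x)) := by
    linear_combination (x - R) * hrb
  have hslope : 0 ≤ (r + b - 2 * R) * (x + R) + x * (R - x) :=
    add_nonneg (mul_nonneg (by linarith) (by linarith)) (mul_nonneg hx0 (by linarith))
  exact sub_nonneg.1 (hfactor ▸ mul_nonneg (by linarith) hslope)

lemma exists_root_mul_sub_mul_sub_and_unique (hR : 0 < R) (hrb : r * b = R ^ 2)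
    (hsum : 2 * R ≤ r + b) (hleft : -R * (-R - r) * (-R - b) < k)
    (hright : k < R * (R - r) * (R - b)) :
    ∃ xc ∈ Set.Ioo (-R) 0, xc * (xc - r) * (xc - b) = k ∧
      ∀ x ∈ Set.Icc (-R) R, x * (x - r) * (x - b) = k → x = xc := by
  have hk : k < 0 := by
    simpa using hright.trans_le (mul_sub_mul_sub_le_of_mem_Icc hrb hsum (Set.left_mem_Icc.2 hR.le))
  have hcont : ContinuousOn (fun x : ℝ => x * (x - r) * (x - b)) (Set.Icc (-R) 0) := by fun_prop
  obtain ⟨xc, hxc, hroot⟩ :=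
    intermediate_value_Ioo (neg_nonpos.2 hR.le) hcont ⟨hleft, by simpa using hk⟩
  refine ⟨xc, hxc, hroot, fun x hx hxroot => ?_⟩
  rcases le_or_gt x 0 with hx0 | hx0
  · have hmono := strictMonoOn_mul_sub_mul_sub (by linarith) (hrb ▸ pow_pos hR 2)
    exact hmono.injOn hx0 hxc.2.le (hxroot.trans hroot.symm)
  · have hle := mul_sub_mul_sub_le_of_mem_Icc hrb hsum ⟨hx0.le, hx.2⟩
    exact absurd (hxroot ▸ hle) hright.not_ge

end Cubic

section Classification

variable {R r b c : ℝ}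

lemma strength_bounds (hR : 0 < R) (hr : 0 < r) (hrR : r < R) (hrb : r * b = R ^ 2)
    (hφ : 0 < R ^ 2 / c)
    (hregion : max ((1 - R ^ 2 / c) / (1 + R ^ 2 / c)) ((R ^ 2 / c - 1) / (1 + R ^ 2 / c)) <
      r / R) :
    R ^ 2 * (r + b - 2 * R) < c * (b - r) ∧ c * (b - r) < R ^ 2 * (r + b + 2 * R) := by
  have hc : 0 < c := (div_pos_iff_of_pos_left (pow_pos hR 2)).1 hφ
  have hφc : R ^ 2 / c * c = R ^ 2 := div_mul_cancel₀ _ hc.ne'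
  obtain ⟨hleft, hright⟩ := max_lt_iff.1 hregion
  rw [div_lt_div_iff₀ (by positivity) hR] at hleft hright
  have hlower : R ^ 2 * (R - r) < c * (R + r) := by
    linear_combination c * hright - (R - r) * hφc
  have hupper : c * (R - r) < R ^ 2 * (R + r) := by
    linear_combination c * hleft + (R + r) * hφc
  constructor <;> refine lt_of_mul_lt_mul_left ?_ hr.le
  · linear_combination mul_lt_mul_of_pos_right hlower (sub_pos.2 hrR) + (R ^ 2 - c) * hrb
  · linear_combination (R + r) * hupper + (c - R ^ 2) * hrb

theorem exists_isVortexEquilibrium_classification {xs : ℝ} (hR : 0 < R) (hrb : r * b = R ^ 2)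
    (hsum : 2 * R ≤ r + b) (hlower : R ^ 2 * (r + b - 2 * R) < c * (b - r))
    (hupper : c * (b - r) < R ^ 2 * (r + b + 2 * R))
    (hxs : R ^ 2 * (r + b - 2 * xs) = c * (b - r)) :
    ∃ xc ∈ Set.Ioo (-R) 0, ∃ ys > 0, xs ^ 2 + ys ^ 2 = R ^ 2 ∧
      IsVortexEquilibrium c r b ⟨xc, 0⟩ ∧ IsVortexEquilibrium c r b ⟨xs, ys⟩ ∧
      IsVortexEquilibrium c r b ⟨xs, -ys⟩ ∧
      ∀ x y : ℝ, x ^ 2 + y ^ 2 ≤ R ^ 2 → IsVortexEquilibrium c r b ⟨x, y⟩ →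
        (x, y) = (xc, 0) ∨ (x, y) = (xs, ys) ∨ (x, y) = (xs, -ys) := by
  have hκ : c * (b - r) ≠ 0 :=
    (hlower.trans_le' (mul_nonneg (sq_nonneg R) (sub_nonneg.2 hsum))).ne'
  obtain ⟨xc, hxc, hroot, hunique⟩ := exists_root_mul_sub_mul_sub_and_unique hR hrb hsum
    (k := -(c * (b - r))) (by linear_combination hupper - R * hrb)
    (by linear_combination hlower - R * hrb)
  have hxs_sq : xs ^ 2 < R ^ 2 := by
    rw [← hxs] at hlower hupper
    have hlt := lt_of_mul_lt_mul_left hlower (sq_nonneg R)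
    have hgt := lt_of_mul_lt_mul_left hupper (sq_nonneg R)
    exact sq_lt_sq' (by linarith) (by linarith)
  obtain ⟨ys, hys, hys_sq⟩ : ∃ ys > 0, ys ^ 2 = R ^ 2 - xs ^ 2 :=
    ⟨_, Real.sqrt_pos.2 (sub_pos.2 hxs_sq), Real.sq_sqrt (sub_nonneg.2 hxs_sq.le)⟩
  have hcircle : xs ^ 2 + ys ^ 2 = R ^ 2 := by rw [hys_sq, add_sub_cancel]
  simp only [isVortexEquilibrium_iff hκ, hrb, true_and]
  refine ⟨xc, hxc, ys, hys, hcircle, .inl hroot, .inr ⟨hcircle, hxs⟩,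
    .inr ⟨by rwa [neg_sq], hxs⟩, ?_⟩
  rintro x y hxy (⟨rfl, hcubic⟩ | ⟨hxy_circle, hlinear⟩)
  · have hx := abs_le.1 (abs_le_of_sq_le_sq (by linarith) hR.le)
    exact .inl (by rw [hunique x hx hcubic])
  · obtain rfl : x = xs := by
      have hcancel := mul_left_cancel₀ (pow_ne_zero 2 hR.ne') (hlinear.trans hxs.symm)
      linarith
    have hy_sq : y ^ 2 = ys ^ 2 := by linarith
    exact .inr ((sq_eq_sq_iff_eq_or_eq_neg.1 hy_sq).imp (congrArg _) (congrArg _))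

end Classification

/-- case (b) of Theorem 1: for `φ₀ > 0` and
`ρ₀ > max{(1−φ₀)/(1+φ₀), (φ₀−1)/(1+φ₀)}` the critical points of `X` in `D_R` are
exactly a center `(x_c, 0)` with `x_c ∈ (−R, 0)` and two hyperbolic saddles
`(x_s*, ±y_s*)` on the boundary circle. -/
theorem case_b_three_critical_points
    (R r₀ θ₀ Γ : ℝ)
    (hR : 0 < R) (hr₀ : 0 < r₀) (hrR : r₀ < R) (hθ : θ₀ ≠ 0) (hΓ : Γ ≠ 0)
    (c ρ₀ φ₀ : ℝ) (hc : c = Γ / (2 * Real.pi * θ₀))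
    (hρ : ρ₀ = r₀ / R) (hφ : φ₀ = R ^ 2 / c) (hφpos : 0 < φ₀)
    (hregion : max ((1 - φ₀) / (1 + φ₀)) ((φ₀ - 1) / (1 + φ₀)) < ρ₀)
    (X : ℝ → ℝ → ℝ × ℝ)
    (hX : ∀ x y : ℝ, X x y =
      (-θ₀ * y + c * θ₀ * y *
          (1 / ((x - r₀) ^ 2 + y ^ 2) - 1 / ((x - R ^ 2 / r₀) ^ 2 + y ^ 2)),
       θ₀ * x - c * θ₀ *
          ((x - r₀) / ((x - r₀) ^ 2 + y ^ 2) -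
            (x - R ^ 2 / r₀) / ((x - R ^ 2 / r₀) ^ 2 + y ^ 2))))
    (xs : ℝ)
    (hxs : xs = (R ^ 2 + r₀ ^ 2) / (2 * r₀) - (c / (2 * r₀)) * (1 - r₀ ^ 2 / R ^ 2)) :
    ∃ xc ys : ℝ,
      (-R < xc ∧ xc < 0) ∧ X xc 0 = (0, 0) ∧ 0 < (jacobianMatrix X xc 0).det ∧
      0 < ys ∧
      ys ^ 2 = (1 / 4) * (2 * (c ^ 2 + R ^ 4) / R ^ 2 - (c - R ^ 2) ^ 2 / r₀ ^ 2 -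
        (c + R ^ 2) ^ 2 * r₀ ^ 2 / R ^ 4) ∧
      xs ^ 2 + ys ^ 2 = R ^ 2 ∧
      X xs ys = (0, 0) ∧ X xs (-ys) = (0, 0) ∧
      (jacobianMatrix X xs ys).det < 0 ∧ (jacobianMatrix X xs (-ys)).det < 0 ∧
      (∀ x y : ℝ, x ^ 2 + y ^ 2 ≤ R ^ 2 → (x, y) ≠ (r₀, 0) → X x y = (0, 0) →
        (x, y) = (xc, 0) ∨ (x, y) = (xs, ys) ∨ (x, y) = (xs, -ys)) := by
  obtain ⟨b, hb⟩ : ∃ b, b = R ^ 2 / r₀ := ⟨_, rfl⟩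
  have hrb : r₀ * b = R ^ 2 := by rw [hb, mul_div_cancel₀ _ hr₀.ne']
  have hsum : 2 * R ≤ r₀ + b :=
    two_mul_le_add_of_sq_le_mul hr₀.le (by rw [hb]; positivity) hrb.ge
  obtain rfl : X = corotatingField θ₀ (vortexPair c r₀ b) := by
    ext1 x; ext1 y; rw [hX, ← hb, corotatingField_vortexPair]
  subst hρ hφ
  obtain ⟨hlower, hupper⟩ := strength_bounds hR hr₀ hrR hrb hφpos hregion
  obtain ⟨xc, hxc, ys, hys, hcircle, center, upper, lower, hclass⟩ :=
    exists_isVortexEquilibrium_classification (xs := xs) hR hrb hsum hlower hupper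
      (by rw [hxs, hb]; field_simp; ring)
  refine ⟨xc, ys, hxc, center.corotatingField_eq_zero θ₀,
    center.det_jacobianMatrix_pos hθ (by linarith) rfl hxc.2
      (hrb ▸ sq_lt_sq' hxc.1 (hxc.2.trans hR)),
    hys, ?_, hcircle, upper.corotatingField_eq_zero θ₀, lower.corotatingField_eq_zero θ₀,
    upper.det_jacobianMatrix_neg hθ hys.ne' (hcircle.trans hrb.symm),
    lower.det_jacobianMatrix_neg hθ (neg_ne_zero.2 hys.ne') (by rw [neg_sq, hcircle, hrb]), ?_⟩
  · rw [eq_sub_of_add_eq' hcircle, hxs]; field_simp; ring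
  · intro x y hxy hne h₀
    have hRb : R ^ 2 < b ^ 2 := pow_lt_pow_left₀ (by linarith) hR.le two_ne_zero
    exact hclass x y hxy (isVortexEquilibrium_of_corotatingField_eq_zero (z := ⟨x, y⟩) hθ
      (by simpa [Complex.ext_iff] using hne) (hxy.trans_lt hRb) h₀)
end

section
/- Assume φ₀ > 0 and 0 < ρ₀ < (φ₀ − 1)/(1 + φ₀). Then the set of critical points of X in the closed disk D_R consists of exactly two points, both on the horizontal axis: a point (x_c, 0) with x_c ∈ (−R, 0) at which det DX > 0 (a center), and a point (x_s, 0) with x_s ∈ (r₀, R) at which det DX < 0 (a hyperbolic saddle). (Case (c) of Theorem 1.) -/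
/-!
With `z = x + i y` the field satisfies `X₂ + i X₁ = θ₀ (conj z - f z)`, where
`f z = c (1 / (z - r₀) - 1 / (z - b))` and `b = R² / r₀`. Its critical points are therefore the
solutions of `conj z (z - r₀) (b - z) = c (b - r₀)`, and `det DX = θ₀² (1 - |f'|²)`.

The imaginary part of this equation is `y (r₀ b - |z|²) = 0`, so a solution off the axis lies on
the circle `|z| = R`. There the left-hand side has modulus at least `P R`, where
`P x = x (x - r₀) (b - x)`, and the condition on `ρ₀` says exactly that `c (b - r₀) < P R`.

On the axis the equation reads `P x = c (b - r₀)`, and at a solution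
`det DX = θ₀² P'(x) (x² - R²) / ((x - r₀) (b - x))²`. Since `P` decreases on `(-∞, 0]`, is not
positive on `[0, r₀]` and increases on `[r₀, R]`, there is one solution on each side, a center where
`P' < 0` and a saddle where `P' > 0`.
-/

namespace VortexPair

open ComplexConjugate Set

/-- The planar field `(u, v)` with `v + i u = θ (conj z - f z)` at `z = x + i y`: the solid rotation
`(-θ y, θ x)` superposed with the flow whose complex velocity `u - i v` is `i θ f z`. -/
noncomputable def rotatingField (θ : ℝ) (f : ℂ → ℂ) (x y : ℝ) : ℝ × ℝ :=
  (θ * (conj (⟨x, y⟩ : ℂ) - f ⟨x, y⟩).im, θ * (conj (⟨x, y⟩ : ℂ) - f ⟨x, y⟩).re)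

/-- The complex velocity, up to a constant factor, of two opposite point vortices of strength
proportional to `c` placed at the points `r` and `b` of the real axis. -/
noncomputable def pairVelocity (c r b : ℝ) (z : ℂ) : ℂ :=
  c * ((z - r)⁻¹ - (z - b)⁻¹)

/-- The cubic whose level set at height `c * (b - r)` consists of the critical points on the real
axis. -/
def axisCubic (r b x : ℝ) : ℝ := x * (x - r) * (b - x)

section Field

variable {θ c r b x y : ℝ} {f : ℂ → ℂ} {z w : ℂ}

lemma rotatingField_eq_zero_iff (hθ : θ ≠ 0) :
    rotatingField θ f x y = 0 ↔ f ⟨x, y⟩ = conj (⟨x, y⟩ : ℂ) := by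
  rw [eq_comm (a := f _), ← sub_eq_zero (a := conj _), Complex.ext_iff, and_comm]
  simp only [rotatingField, Prod.mk_eq_zero, mul_eq_zero, hθ, false_or, Complex.zero_re,
    Complex.zero_im]

lemma det_jacobianMatrix_rotatingField {f' : ℂ} (hf : HasDerivAt f f' ⟨x, y⟩) :
    (jacobianMatrix (rotatingField θ f) x y).det = θ ^ 2 * (1 - ‖f'‖ ^ 2) := by
  have horizontal : HasDerivAt (fun s : ℝ ↦ (⟨s, y⟩ : ℂ)) 1 x := by
    simpa only [Complex.mk_eq_add_mul_I, Complex.ofReal_one, id_eq] using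
      (hasDerivAt_id x).ofReal_comp.add_const (y * Complex.I)
  have vertical : HasDerivAt (fun s : ℝ ↦ (⟨x, s⟩ : ℂ)) Complex.I y := by
    simpa only [Complex.mk_eq_add_mul_I, Complex.ofReal_one, one_mul, id_eq] using
      ((hasDerivAt_id y).ofReal_comp.mul_const Complex.I).const_add (x : ℂ)
  have hx : HasDerivAt (fun s : ℝ ↦ conj (⟨s, y⟩ : ℂ) - f ⟨s, y⟩) (1 - f') x :=
    (horizontal.star.sub (hf.comp x horizontal)).congr_deriv (by simp)
  have hy : HasDerivAt (fun s : ℝ ↦ conj (⟨x, s⟩ : ℂ) - f ⟨x, s⟩)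
      (-Complex.I - f' * Complex.I) y :=
    (vertical.star.sub (hf.comp y vertical)).congr_deriv (by simp)
  have re_part {g : ℝ → ℂ} {g' : ℂ} {t : ℝ} (hg : HasDerivAt g g' t) :
      deriv (fun s ↦ θ * (g s).re) t = θ * g'.re :=
    ((Complex.reCLM.hasFDerivAt.comp_hasDerivAt t hg).const_mul θ).deriv
  have im_part {g : ℝ → ℂ} {g' : ℂ} {t : ℝ} (hg : HasDerivAt g g' t) :
      deriv (fun s ↦ θ * (g s).im) t = θ * g'.im :=
    ((Complex.imCLM.hasFDerivAt.comp_hasDerivAt t hg).const_mul θ).deriv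
  simp only [jacobianMatrix, rotatingField, Matrix.det_fin_two_of]
  rw [im_part hx, im_part hy, re_part hx, re_part hy, Complex.sq_norm, Complex.normSq_apply]
  simp only [Complex.sub_re, Complex.sub_im, Complex.neg_re, Complex.neg_im, Complex.mul_re,
    Complex.mul_im, Complex.one_re, Complex.one_im, Complex.I_re, Complex.I_im]
  ring

lemma rotatingField_pairVelocity :
    rotatingField θ (pairVelocity c r b) x y =
      (-θ * y + c * θ * y * (1 / ((x - r) ^ 2 + y ^ 2) - 1 / ((x - b) ^ 2 + y ^ 2)),
       θ * x - c * θ * ((x - r) / ((x - r) ^ 2 + y ^ 2) - (x - b) / ((x - b) ^ 2 + y ^ 2))) := by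
  ext <;>
    simp only [rotatingField, pairVelocity, Complex.sub_re, Complex.sub_im, Complex.mul_re,
      Complex.mul_im, Complex.inv_re, Complex.inv_im, Complex.conj_re, Complex.conj_im,
      Complex.ofReal_re, Complex.ofReal_im, Complex.normSq_apply, ← sq] <;>
    ring

lemma pairVelocity_eq_iff (hzr : z ≠ r) (hzb : z ≠ b) :
    pairVelocity c r b z = w ↔ w * (z - r) * (b - z) = c * (b - r) := by
  have hr : z - r ≠ 0 := sub_ne_zero.2 hzr
  have hb : z - b ≠ 0 := sub_ne_zero.2 hzb
  rw [pairVelocity, inv_sub_inv hr hb, mul_div_assoc', div_eq_iff (mul_ne_zero hr hb)]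
  constructor <;> intro h <;> linear_combination h

lemma hasDerivAt_pairVelocity (hzr : z ≠ r) (hzb : z ≠ b) :
    HasDerivAt (pairVelocity c r b) (-pairVelocity c r b z * ((z - r)⁻¹ + (z - b)⁻¹)) z := by
  have hinv {a : ℂ} (ha : z ≠ a) : HasDerivAt (fun u ↦ (u - a)⁻¹) (-1 / (z - a) ^ 2) z :=
    ((hasDerivAt_id z).sub_const a).fun_inv (sub_ne_zero.2 ha)
  refine (((hinv hzr).sub (hinv hzb)).const_mul (c : ℂ)).congr_deriv ?_
  rw [pairVelocity, div_eq_mul_inv, div_eq_mul_inv, ← inv_pow, ← inv_pow]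
  ring

lemma rotatingField_pairVelocity_eq_zero_iff (hθ : θ ≠ 0) (hzr : (⟨x, y⟩ : ℂ) ≠ r)
    (hzb : (⟨x, y⟩ : ℂ) ≠ b) :
    rotatingField θ (pairVelocity c r b) x y = 0 ↔
      conj (⟨x, y⟩ : ℂ) * (⟨x, y⟩ - r) * (b - ⟨x, y⟩) = c * (b - r) :=
  (rotatingField_eq_zero_iff hθ).trans (pairVelocity_eq_iff hzr hzb)

lemma rotatingField_pairVelocity_axis_eq_zero_iff (hθ : θ ≠ 0) (hxr : x ≠ r) (hxb : x ≠ b) :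
    rotatingField θ (pairVelocity c r b) x 0 = 0 ↔ axisCubic r b x = c * (b - r) := by
  rw [rotatingField_pairVelocity_eq_zero_iff hθ (Complex.ofReal_injective.ne hxr)
    (Complex.ofReal_injective.ne hxb), axisCubic, ← Complex.ofReal_def, Complex.conj_ofReal]
  norm_cast

end Field

section AxisCubic

variable {c r b R x : ℝ}

lemma lt_of_mul_eq_sq (hr : 0 < r) (hrR : r < R) (hb : r * b = R ^ 2) : R < b := by
  by_contra! hbR
  nlinarith

lemma le_midpoint_of_mul_eq_sq (hr : 0 ≤ r) (hb₀ : 0 ≤ b) (hb : r * b = R ^ 2) :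
    R ≤ (r + b) / 2 := by
  linarith [two_mul_le_add_of_sq_le_mul hr hb₀ hb.ge]

lemma continuous_axisCubic : Continuous (axisCubic r b) := by
  unfold axisCubic
  fun_prop

lemma deriv_axisCubic :
    deriv (axisCubic r b) x = (x - r) * (b - x) + x * (r + b - 2 * x) := by
  have h := ((hasDerivAt_id x).mul ((hasDerivAt_id x).sub_const r)).mul
    ((hasDerivAt_id x).const_sub b)
  refine h.deriv.trans ?_
  simp only [id_eq, Pi.mul_apply]
  ring

lemma deriv_axisCubic_neg (hr : 0 < r) (hrb : r < b) (hx : x < 0) :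
    deriv (axisCubic r b) x < 0 := by
  rw [deriv_axisCubic]
  exact add_neg (mul_neg_of_neg_of_pos (by linarith) (by linarith))
    (mul_neg_of_neg_of_pos hx (by linarith))

lemma deriv_axisCubic_pos (hr : 0 ≤ r) (hrx : r < x) (hx : x < (r + b) / 2) :
    0 < deriv (axisCubic r b) x := by
  rw [deriv_axisCubic]
  exact add_pos (mul_pos (by linarith) (by linarith)) (mul_pos (by linarith) (by linarith))

lemma strictAntiOn_axisCubic (hr : 0 < r) (hrb : r < b) :
    StrictAntiOn (axisCubic r b) (Iic 0) :=
  strictAntiOn_of_deriv_neg (convex_Iic 0) continuous_axisCubic.continuousOn fun x hx ↦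
    deriv_axisCubic_neg hr hrb (by simpa using hx)

lemma strictMonoOn_axisCubic (hr : 0 ≤ r) :
    StrictMonoOn (axisCubic r b) (Icc r ((r + b) / 2)) :=
  strictMonoOn_of_deriv_pos (convex_Icc _ _) continuous_axisCubic.continuousOn fun x hx ↦ by
    rw [interior_Icc] at hx
    exact deriv_axisCubic_pos hr hx.1 hx.2

lemma neg_or_lt_of_axisCubic_pos (hxb : x ≤ b) (hx : 0 < axisCubic r b x) : x < 0 ∨ r < x := by
  by_contra! h
  exact hx.not_ge (mul_nonpos_of_nonpos_of_nonneg
    (mul_nonpos_of_nonneg_of_nonpos h.1 (sub_nonpos.2 h.2)) (sub_nonneg.2 hxb))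

lemma eq_or_eq_of_axisCubic_eq {u v : ℝ} (hr : 0 < r) (hrb : r < b) (hu : u ≤ 0)
    (hv : v ∈ Icc r ((r + b) / 2)) (hx : x ≤ (r + b) / 2) (hpos : 0 < axisCubic r b x)
    (hxu : axisCubic r b x = axisCubic r b u) (hxv : axisCubic r b x = axisCubic r b v) :
    x = u ∨ x = v :=
  (neg_or_lt_of_axisCubic_pos (by linarith) hpos).imp
    (fun hneg ↦ (strictAntiOn_axisCubic hr hrb).injOn hneg.le hu hxu)
    (fun hlt ↦ (strictMonoOn_axisCubic hr.le).injOn ⟨hlt.le, hx⟩ hv hxv)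

lemma exists_mem_Ioo_axisCubic_eq_of_pos {k : ℝ} (hrR : r ≤ R) (hk : 0 < k)
    (hkR : k < axisCubic r b R) : ∃ x ∈ Ioo r R, axisCubic r b x = k :=
  intermediate_value_Ioo hrR continuous_axisCubic.continuousOn ⟨by simpa [axisCubic] using hk, hkR⟩

lemma axisCubic_le_axisCubic_neg (hr : 0 ≤ r) (hb : 0 ≤ b) (hR : 0 ≤ R) :
    axisCubic r b R ≤ axisCubic r b (-R) := by
  have hdiff : axisCubic r b (-R) - axisCubic r b R = 2 * R * (R ^ 2 + r * b) := by
    unfold axisCubic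
    ring
  have : 0 ≤ 2 * R * (R ^ 2 + r * b) := by positivity
  linarith

lemma exists_mem_Ioo_axisCubic_eq_of_neg {k : ℝ} (hr : 0 ≤ r) (hb : 0 ≤ b) (hR : 0 ≤ R)
    (hk : 0 < k) (hkR : k < axisCubic r b R) : ∃ x ∈ Ioo (-R) 0, axisCubic r b x = k :=
  intermediate_value_Ioo' (neg_nonpos.2 hR) continuous_axisCubic.continuousOn
    ⟨by simpa [axisCubic] using hk, hkR.trans_le (axisCubic_le_axisCubic_neg hr hb hR)⟩

lemma lt_axisCubic_iff (hr : 0 < r) (hrR : r < R) (hc : 0 < c) :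
    c * (R ^ 2 / r - r) < axisCubic r (R ^ 2 / r) R ↔
      r / R < (R ^ 2 / c - 1) / (1 + R ^ 2 / c) := by
  have hR : 0 < R := hr.trans hrR
  have hlevel : axisCubic r (R ^ 2 / r) R - c * (R ^ 2 / r - r) =
      (R - r) / r * (R ^ 2 * (R - r) - c * (R + r)) := by
    unfold axisCubic
    field_simp
    ring
  have hratio : (R ^ 2 / c - 1) / (1 + R ^ 2 / c) - r / R =
      (R ^ 2 * (R - r) - c * (R + r)) / (R * (c + R ^ 2)) := by
    field_simp
    ring
  rw [← sub_pos, hlevel, ← sub_pos (b := r / R), hratio,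
    mul_pos_iff_of_pos_left (div_pos (sub_pos.2 hrR) hr), div_pos_iff_of_pos_right (by positivity)]

end AxisCubic

section CriticalPoints

variable {θ c r b R x y k : ℝ} {z : ℂ}

lemma det_jacobianMatrix_of_axisCubic_eq (hxr : x ≠ r) (hxb : x ≠ b)
    (hx : axisCubic r b x = c * (b - r)) :
    (jacobianMatrix (rotatingField θ (pairVelocity c r b)) x 0).det =
      θ ^ 2 * (deriv (axisCubic r b) x * (x ^ 2 - r * b) / ((x - r) * (b - x)) ^ 2) := by
  have hzr : (x : ℂ) ≠ r := Complex.ofReal_injective.ne hxr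
  have hzb : (x : ℂ) ≠ b := Complex.ofReal_injective.ne hxb
  have hvel : pairVelocity c r b x = x :=
    (pairVelocity_eq_iff hzr hzb).2 (by exact_mod_cast hx)
  have hderiv : HasDerivAt (pairVelocity c r b)
      ((-x * ((x - r)⁻¹ + (x - b)⁻¹) : ℝ) : ℂ) ⟨x, 0⟩ := by
    have h := hasDerivAt_pairVelocity (c := c) hzr hzb
    rw [hvel] at h
    exact_mod_cast h
  have hr : x - r ≠ 0 := sub_ne_zero.2 hxr
  have hb : b - x ≠ 0 := sub_ne_zero.2 hxb.symm
  rw [det_jacobianMatrix_rotatingField hderiv, Complex.norm_real, Real.norm_eq_abs, sq_abs,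
    deriv_axisCubic, ← neg_sub b x]
  field_simp
  ring

lemma det_jacobianMatrix_axis_pos (hθ : θ ≠ 0) (hxr : x ≠ r) (hxb : x ≠ b)
    (hx : axisCubic r b x = c * (b - r)) (hdisk : x ^ 2 < r * b)
    (hderiv : deriv (axisCubic r b) x < 0) :
    0 < (jacobianMatrix (rotatingField θ (pairVelocity c r b)) x 0).det := by
  have hden : 0 < ((x - r) * (b - x)) ^ 2 :=
    sq_pos_iff.2 (mul_ne_zero (sub_ne_zero.2 hxr) (sub_ne_zero.2 hxb.symm))
  rw [det_jacobianMatrix_of_axisCubic_eq hxr hxb hx]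
  exact mul_pos (sq_pos_iff.2 hθ)
    (div_pos (mul_pos_of_neg_of_neg hderiv (sub_neg.2 hdisk)) hden)

lemma det_jacobianMatrix_axis_neg (hθ : θ ≠ 0) (hxr : x ≠ r) (hxb : x ≠ b)
    (hx : axisCubic r b x = c * (b - r)) (hdisk : x ^ 2 < r * b)
    (hderiv : 0 < deriv (axisCubic r b) x) :
    (jacobianMatrix (rotatingField θ (pairVelocity c r b)) x 0).det < 0 := by
  have hden : 0 < ((x - r) * (b - x)) ^ 2 :=
    sq_pos_iff.2 (mul_ne_zero (sub_ne_zero.2 hxr) (sub_ne_zero.2 hxb.symm))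
  rw [det_jacobianMatrix_of_axisCubic_eq hxr hxb hx]
  exact mul_neg_of_pos_of_neg (sq_pos_iff.2 hθ)
    (div_neg_of_neg_of_pos (mul_neg_of_pos_of_neg hderiv (sub_neg.2 hdisk)) hden)

lemma normSq_eq_mul_of_im_ne_zero (hz : conj z * (z - r) * (b - z) = k) (him : z.im ≠ 0) :
    Complex.normSq z = r * b := by
  have h : z.im * (r * b - Complex.normSq z) = 0 := by
    have him_eq := congrArg Complex.im hz
    simp only [Complex.mul_re, Complex.mul_im, Complex.sub_re, Complex.sub_im, Complex.conj_re,
      Complex.conj_im, Complex.ofReal_re, Complex.ofReal_im] at him_eq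
    rw [Complex.normSq_apply]
    linear_combination him_eq
  linarith [(mul_eq_zero.1 h).resolve_left him]

lemma axisCubic_norm_le (hr : 0 ≤ r) (hzb : ‖z‖ ≤ b) :
    axisCubic r b ‖z‖ ≤ ‖conj z * (z - r) * (b - z)‖ := by
  have hsub_r : ‖z‖ - r ≤ ‖z - r‖ := by
    simpa [abs_of_nonneg hr] using norm_sub_norm_le z r
  have hsub_b : b - ‖z‖ ≤ ‖(b : ℂ) - z‖ := by
    simpa [abs_of_nonneg ((norm_nonneg z).trans hzb)] using norm_sub_norm_le (b : ℂ) z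
  rw [norm_mul, norm_mul, Complex.norm_conj, axisCubic]
  gcongr

lemma im_eq_zero_of_abs_lt_axisCubic (hr : 0 ≤ r) (hR : 0 ≤ R) (hRb : R ≤ b) (hb : r * b = R ^ 2)
    (hk : |k| < axisCubic r b R) (hz : conj z * (z - r) * (b - z) = k) : z.im = 0 := by
  by_contra him
  have hnorm : ‖z‖ = R := by
    rw [← sq_eq_sq₀ (norm_nonneg z) hR, Complex.sq_norm,
      normSq_eq_mul_of_im_ne_zero hz him, hb]
  have hle := axisCubic_norm_le (z := z) hr (hnorm.trans_le hRb)
  rw [hz, hnorm, Complex.norm_real, Real.norm_eq_abs] at hle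
  exact hk.not_ge hle

lemma exists_center (hθ : θ ≠ 0) (hc : 0 < c) (hr : 0 < r) (hrR : r < R) (hb : r * b = R ^ 2)
    (hlevel : c * (b - r) < axisCubic r b R) :
    ∃ x ∈ Ioo (-R) 0, axisCubic r b x = c * (b - r) ∧
      rotatingField θ (pairVelocity c r b) x 0 = 0 ∧
      0 < (jacobianMatrix (rotatingField θ (pairVelocity c r b)) x 0).det := by
  have hRb : R < b := lt_of_mul_eq_sq hr hrR hb
  have hk : 0 < c * (b - r) := mul_pos hc (by linarith)
  obtain ⟨x, hx, hP⟩ := exists_mem_Ioo_axisCubic_eq_of_neg hr.le (by linarith) (by linarith)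
    hk hlevel
  have hxr : x ≠ r := (hx.2.trans hr).ne
  have hxb : x ≠ b := (by linarith [hx.2] : x < b).ne
  have hdisk : x ^ 2 < r * b := hb ▸ sq_lt_sq' hx.1 (by linarith [hx.2])
  exact ⟨x, hx, hP, (rotatingField_pairVelocity_axis_eq_zero_iff hθ hxr hxb).2 hP,
    det_jacobianMatrix_axis_pos hθ hxr hxb hP hdisk
      (deriv_axisCubic_neg hr (hrR.trans hRb) hx.2)⟩

lemma exists_saddle (hθ : θ ≠ 0) (hc : 0 < c) (hr : 0 < r) (hrR : r < R) (hb : r * b = R ^ 2)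
    (hlevel : c * (b - r) < axisCubic r b R) :
    ∃ x ∈ Ioo r R, axisCubic r b x = c * (b - r) ∧
      rotatingField θ (pairVelocity c r b) x 0 = 0 ∧
      (jacobianMatrix (rotatingField θ (pairVelocity c r b)) x 0).det < 0 := by
  have hRb : R < b := lt_of_mul_eq_sq hr hrR hb
  have hk : 0 < c * (b - r) := mul_pos hc (by linarith)
  obtain ⟨x, hx, hP⟩ := exists_mem_Ioo_axisCubic_eq_of_pos hrR.le hk hlevel
  have hxr : x ≠ r := hx.1.ne'
  have hxb : x ≠ b := (hx.2.trans hRb).ne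
  have hdisk : x ^ 2 < r * b := hb ▸ sq_lt_sq' (by linarith [hx.1]) hx.2
  have hmid : R ≤ (r + b) / 2 := le_midpoint_of_mul_eq_sq hr.le (by linarith) hb
  exact ⟨x, hx, hP, (rotatingField_pairVelocity_axis_eq_zero_iff hθ hxr hxb).2 hP,
    det_jacobianMatrix_axis_neg hθ hxr hxb hP hdisk
      (deriv_axisCubic_pos hr.le hx.1 (hx.2.trans_le hmid))⟩

lemma axisCubic_eq_of_rotatingField_eq_zero (hθ : θ ≠ 0) (hc : 0 ≤ c) (hr : 0 < r) (hrR : r < R)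
    (hb : r * b = R ^ 2) (hlevel : c * (b - r) < axisCubic r b R)
    (hdisk : x ^ 2 + y ^ 2 ≤ R ^ 2) (hne : (x, y) ≠ (r, 0))
    (h : rotatingField θ (pairVelocity c r b) x y = 0) :
    y = 0 ∧ axisCubic r b x = c * (b - r) := by
  have hRb : R < b := lt_of_mul_eq_sq hr hrR hb
  have hxb : x < b := by nlinarith
  have hzr : (⟨x, y⟩ : ℂ) ≠ r := by simpa [Complex.ext_iff] using hne
  have hzb : (⟨x, y⟩ : ℂ) ≠ b := fun hz ↦ hxb.ne (congrArg Complex.re hz)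
  have hk : |c * (b - r)| < axisCubic r b R := by
    rwa [abs_of_nonneg (mul_nonneg hc (by linarith))]
  obtain rfl : y = 0 := im_eq_zero_of_abs_lt_axisCubic hr.le (hr.trans hrR).le hRb.le hb hk
    (by exact_mod_cast (rotatingField_pairVelocity_eq_zero_iff hθ hzr hzb).1 h)
  have hxr : x ≠ r := by simpa using hne
  exact ⟨rfl, (rotatingField_pairVelocity_axis_eq_zero_iff hθ hxr hxb.ne).1 h⟩

end CriticalPoints

end VortexPair

open VortexPair

/-- case (c) of Theorem 1: for `φ₀ > 0` and `0 < ρ₀ < (φ₀−1)/(1+φ₀)`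
the critical points of `X` in `D_R` are exactly a center `(x_c, 0)` with
`x_c ∈ (−R, 0)` and a hyperbolic saddle `(x_s, 0)` with `x_s ∈ (r₀, R)`. -/
theorem case_c_two_critical_points
    (R r₀ θ₀ Γ : ℝ)
    (hR : 0 < R) (hr₀ : 0 < r₀) (hrR : r₀ < R) (hθ : θ₀ ≠ 0) (hΓ : Γ ≠ 0)
    (c ρ₀ φ₀ : ℝ) (hc : c = Γ / (2 * Real.pi * θ₀))
    (hρ : ρ₀ = r₀ / R) (hφ : φ₀ = R ^ 2 / c) (hφpos : 0 < φ₀)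
    (hregion : 0 < ρ₀ ∧ ρ₀ < (φ₀ - 1) / (1 + φ₀))
    (X : ℝ → ℝ → ℝ × ℝ)
    (hX : ∀ x y : ℝ, X x y =
      (-θ₀ * y + c * θ₀ * y *
          (1 / ((x - r₀) ^ 2 + y ^ 2) - 1 / ((x - R ^ 2 / r₀) ^ 2 + y ^ 2)),
       θ₀ * x - c * θ₀ *
          ((x - r₀) / ((x - r₀) ^ 2 + y ^ 2) -
            (x - R ^ 2 / r₀) / ((x - R ^ 2 / r₀) ^ 2 + y ^ 2)))) :
    ∃ xc xs : ℝ,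
      (-R < xc ∧ xc < 0) ∧ X xc 0 = (0, 0) ∧ 0 < (jacobianMatrix X xc 0).det ∧
      (r₀ < xs ∧ xs < R) ∧ X xs 0 = (0, 0) ∧ (jacobianMatrix X xs 0).det < 0 ∧
      (∀ x y : ℝ, x ^ 2 + y ^ 2 ≤ R ^ 2 → (x, y) ≠ (r₀, 0) → X x y = (0, 0) →
        (x, y) = (xc, 0) ∨ (x, y) = (xs, 0)) := by
  subst hρ hφ
  have hcpos : 0 < c := (div_pos_iff_of_pos_left (pow_pos hR 2)).1 hφpos
  have hlevel := (lt_axisCubic_iff hr₀ hrR hcpos).2 hregion.2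
  obtain rfl : X = rotatingField θ₀ (pairVelocity c r₀ (R ^ 2 / r₀)) := by
    funext x y
    rw [hX, rotatingField_pairVelocity]
  have hb : r₀ * (R ^ 2 / r₀) = R ^ 2 := mul_div_cancel₀ _ hr₀.ne'
  generalize R ^ 2 / r₀ = b at *
  have hrb : r₀ < b := hrR.trans (lt_of_mul_eq_sq hr₀ hrR hb)
  have hmid : R ≤ (r₀ + b) / 2 := le_midpoint_of_mul_eq_sq hr₀.le (hr₀.trans hrb).le hb
  obtain ⟨xc, hxc, hPc, hXc, hdetc⟩ := exists_center hθ hcpos hr₀ hrR hb hlevel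
  obtain ⟨xs, hxs, hPs, hXs, hdets⟩ := exists_saddle hθ hcpos hr₀ hrR hb hlevel
  refine ⟨xc, xs, hxc, hXc, hdetc, hxs, hXs, hdets, fun x y hdisk hne hcrit ↦ ?_⟩
  obtain ⟨rfl, hP⟩ :=
    axisCubic_eq_of_rotatingField_eq_zero hθ hcpos.le hr₀ hrR hb hlevel hdisk hne hcrit
  have hxR : x ≤ R := by nlinarith
  have hpos : 0 < axisCubic r₀ b x := hP ▸ mul_pos hcpos (sub_pos.2 hrb)
  exact (eq_or_eq_of_axisCubic_eq hr₀ hrb hxc.2.le ⟨hxs.1.le, hxs.2.le.trans hmid⟩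
    (hxR.trans hmid) hpos (hP.trans hPc.symm) (hP.trans hPs.symm)).imp
    (congrArg (·, 0)) (congrArg (·, 0))
end
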